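/- arXiv:1303.6030 — 2 statements merged into one kernel-verified Lean document; each statement's English description precedes it below -/
import Mathlib

section
/- Let K be an infinite field and S = K[x_1,...,x_n] a standard graded polynomial ring. Let I ⊆ S and J ⊆ S be homogeneous ideals. Then for a general change of coordinates g ∈ GL_n(K), the Hilbert functions H(I ∩ g(J), −) and H(I·g(J), −) are well defined; that is, there exists a nonempty Zariski open subset U ⊆ GL_n(K) such that the Hilbert function of I ∩ g(J) (respectively of I·g(J)) is the same for all g ∈ U. -/
open MvPolynomial TensorProduct

noncomputable section

/-- The polynomial ring `S = K[x_1,...,x_n]`. -/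
abbrev PS (K : Type) [Field K] (n : ℕ) : Type := MvPolynomial (Fin n) K

variable (K : Type) [Field K] (n : ℕ)

/-- An ideal is homogeneous if it contains all homogeneous components of its elements. -/
def IsHomog (I : Ideal (PS K n)) : Prop :=
  ∀ f ∈ I, ∀ d : ℕ, MvPolynomial.homogeneousComponent d f ∈ I

/-- The Hilbert function of an ideal: `H(I,d) = dim_K I_d`. -/
def hilb (I : Ideal (PS K n)) (d : ℕ) : ℕ :=
  Module.finrank K ↥(Submodule.restrictScalars K I ⊓ homogeneousSubmodule (Fin n) K d)

/-- The change of coordinates of `S` induced by `g ∈ GL_n(K)`, determined by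
`g(x_i) = ∑_j g_{ji} x_j`. -/
def coordChange (g : GL (Fin n) K) : PS K n →ₐ[K] PS K n :=
  MvPolynomial.aeval (fun i => ∑ j, ((g : Matrix (Fin n) (Fin n) K) j i) • MvPolynomial.X j)

/-- A property `P` holds for a general change of coordinates `g ∈ GL_n(K)` if there is a
nonempty Zariski open subset `U ⊆ GL_n(K)` on which it holds; equivalently (as `GL_n` is an
irreducible variety) there is a nonzero polynomial `F` in the matrix entries such that `P g`
holds whenever `F` does not vanish at `g`. -/
def generally (P : GL (Fin n) K → Prop) : Prop :=
  ∃ F : MvPolynomial (Fin n × Fin n) K, F ≠ 0 ∧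
    ∀ g : GL (Fin n) K,
      MvPolynomial.eval (fun p => (g : Matrix (Fin n) (Fin n) K) p.1 p.2) F ≠ 0 → P g

section helpers

attribute [local instance] MvPolynomial.gradedAlgebra

/-- Homogeneity of an ideal over an arbitrary coefficient ring. -/
def HomIdeal {A : Type*} [CommRing A] {n : ℕ} (L : Ideal (MvPolynomial (Fin n) A)) : Prop :=
  ∀ f ∈ L, ∀ d : ℕ, MvPolynomial.homogeneousComponent d f ∈ L

theorem homIdeal_iff {A : Type*} [CommRing A] {n : ℕ} (L : Ideal (MvPolynomial (Fin n) A)) :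
    HomIdeal L ↔ L.IsHomogeneous (homogeneousSubmodule (Fin n) A) := by
  constructor
  · intro h d f hf
    have := decomposition.decompose'_apply f d
    exact this ▸ h f hf d
  · intro h f hf d
    have := decomposition.decompose'_apply f d
    exact this ▸ h d hf

theorem homIdeal_mul {A : Type*} [CommRing A] {n : ℕ} {L M : Ideal (MvPolynomial (Fin n) A)}
    (hL : HomIdeal L) (hM : HomIdeal M) : HomIdeal (L * M) := by
  rw [homIdeal_iff] at *
  exact hL.mul hM

theorem homIdeal_sup {A : Type*} [CommRing A] {n : ℕ} {L M : Ideal (MvPolynomial (Fin n) A)}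
    (hL : HomIdeal L) (hM : HomIdeal M) : HomIdeal (L ⊔ M) := by
  rw [homIdeal_iff] at *
  exact hL.sup hM

theorem homIdeal_map {A B : Type*} [CommRing A] [CommRing B] {n : ℕ}
    {L : Ideal (MvPolynomial (Fin n) A)}
    (hL : HomIdeal L) (ψ : MvPolynomial (Fin n) A →+* MvPolynomial (Fin n) B)
    (hψ : ∀ f d, f.IsHomogeneous d → (ψ f).IsHomogeneous d) : HomIdeal (L.map ψ) := by
  have : L.map ψ = Ideal.span (ψ '' {f | f ∈ L ∧ ∃ d, f.IsHomogeneous d}) := by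
    apply le_antisymm
    · rw [Ideal.map_le_iff_le_comap]
      intro f hf
      rw [Ideal.mem_comap, ← sum_homogeneousComponent f, map_sum]
      refine Ideal.sum_mem _ fun i _ => Ideal.subset_span ⟨_, ⟨hL f hf i, i, ?_⟩, rfl⟩
      exact homogeneousComponent_isHomogeneous _ _
    · rw [Ideal.span_le]
      rintro _ ⟨f, ⟨hf, _⟩, rfl⟩
      exact Ideal.mem_map_of_mem _ hf
  rw [this, homIdeal_iff]
  apply Ideal.homogeneous_span
  rintro _ ⟨f, ⟨hf, d, hd⟩, rfl⟩
  exact ⟨d, hψ f d hd⟩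

/-- `m` bounds all exponents of `f` for the lexicographic order. -/
def LeadLE {A : Type*} [CommRing A] {n : ℕ} (f : MvPolynomial (Fin n) A)
    (m : Fin n →₀ ℕ) : Prop :=
  ∀ m', coeff m' f ≠ 0 → (MonomialOrder.lex (σ := Fin n)).toSyn m' ≤
    (MonomialOrder.lex (σ := Fin n)).toSyn m

/-- The set of leading exponents of homogeneous elements of `L`. -/
def leadSet {A : Type*} [CommRing A] {n : ℕ} (L : Ideal (MvPolynomial (Fin n) A)) :
    Set (Fin n →₀ ℕ) :=
  {m | ∃ f ∈ L, f.IsHomogeneous m.degree ∧ coeff m f ≠ 0 ∧ LeadLE f m}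

/-- A finite Gröbner basis up to inverting a single nonzero coefficient. -/
theorem exists_basis {A : Type*} [CommRing A] [IsDomain A] {n : ℕ}
    (L : Ideal (MvPolynomial (Fin n) A)) :
    ∃ F : A, F ≠ 0 ∧ ∃ b : (Fin n →₀ ℕ) → MvPolynomial (Fin n) A, ∀ m ∈ leadSet L,
      b m ∈ L ∧ (b m).IsHomogeneous m.degree ∧ coeff m (b m) ∣ F ∧ LeadLE (b m) m := by
  classical
  have hfin : {x | Minimal (· ∈ leadSet L) x}.Finite :=
    WellQuasiOrderedLE.finite_of_isAntichain (setOfPred_minimal_antichain _)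
  have hsel : ∀ m, ∃ f, m ∈ leadSet L →
      (f ∈ L ∧ f.IsHomogeneous m.degree ∧ coeff m f ≠ 0 ∧ LeadLE f m) := by
    intro m
    by_cases hm : m ∈ leadSet L
    · obtain ⟨f, h1, h2⟩ := hm
      exact ⟨f, fun _ => ⟨h1, h2⟩⟩
    · exact ⟨0, fun h => absurd h hm⟩
  choose f hf using hsel
  refine ⟨∏ m ∈ hfin.toFinset, coeff m (f m), ?_, ?_⟩
  · rw [Finset.prod_ne_zero_iff]
    intro m hm
    have hm' : Minimal (· ∈ leadSet L) m := by simpa using hm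
    exact (hf m hm'.prop).2.2.1
  · have hb : ∀ m, ∃ b : MvPolynomial (Fin n) A, m ∈ leadSet L → 
        (b ∈ L ∧ b.IsHomogeneous m.degree ∧
          coeff m b ∣ (∏ m ∈ hfin.toFinset, coeff m (f m)) ∧ LeadLE b m) := by
      intro m
      by_cases hm : m ∈ leadSet L
      swap
      · exact ⟨0, fun h => absurd h hm⟩
      obtain ⟨k, hkm, hk⟩ := exists_minimal_le_of_wellFoundedLT (· ∈ leadSet L) m hm
      obtain ⟨h1, h2, h3, h4⟩ := hf k hk.prop
      refine ⟨monomial (m - k) 1 * f k, fun _ => ⟨Ideal.mul_mem_left _ _ h1, ?_, ?_, ?_⟩⟩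
      · have h5 := (isHomogeneous_monomial (σ := Fin n) (1 : A) (d := m - k) rfl).mul h2
        have : (m - k).degree + k.degree = m.degree := by
          rw [← map_add, tsub_add_cancel_of_le hkm]
        rwa [this] at h5
      · have : coeff m (monomial (m - k) 1 * f k) = coeff k (f k) := by
          rw [coeff_monomial_mul', if_pos tsub_le_self, one_mul, tsub_tsub_cancel_of_le hkm]
        rw [this]
        apply Finset.dvd_prod_of_mem (fun m => coeff m (f m))
        simpa using hk
      · intro m' hm'
        rw [coeff_monomial_mul'] at hm'
        split_ifs at hm' with hle
        · rw [one_mul] at hm'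
          have h6 := h4 _ hm'
          have h7 := add_le_add_right h6 ((MonomialOrder.lex (σ := Fin n)).toSyn (m - k))
          rw [← map_add, ← map_add] at h7
          rwa [add_tsub_cancel_of_le hle, tsub_add_cancel_of_le hkm] at h7
        · exact absurd rfl hm'
    choose b hb using hb
    exact ⟨b, hb⟩

theorem span_basis {A : Type*} [CommRing A] [IsDomain A] {n : ℕ}
    (L : Ideal (MvPolynomial (Fin n) A)) (F : A) (hF : F ≠ 0)
    (b : (Fin n →₀ ℕ) → MvPolynomial (Fin n) A) (hb : ∀ m ∈ leadSet L,
      b m ∈ L ∧ (b m).IsHomogeneous m.degree ∧ coeff m (b m) ∣ F ∧ LeadLE (b m) m)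
    (d : ℕ) (p : MvPolynomial (Fin n) A) (hp : p ∈ L) (hpd : p.IsHomogeneous d) :
    ∃ k : ℕ, F ^ k • p ∈ Submodule.span A (b '' {m | m ∈ leadSet L ∧ m.degree = d}) := by
  classical
  let o := MonomialOrder.lex (σ := Fin n)
  induction hs : o.toSyn (o.degree p) using WellFoundedLT.induction generalizing p with
  | ind s ih =>
  subst hs
  by_cases hp0 : p = 0
  · exact ⟨0, by simp [hp0]⟩
  set m := o.degree p with hm
  have hc : coeff m p ≠ 0 := o.coeff_degree_ne_zero_iff.2 hp0
  have hmd : m.degree = d := by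
    have := hpd hc
    rw [Finsupp.degree_eq_weight_one]
    exact this
  have hle : LeadLE p m := fun m' h' => o.le_degree (mem_support_iff.2 h')
  have hmL : m ∈ leadSet L := ⟨p, hp, by rwa [hmd], hc, hle⟩
  obtain ⟨h1, h2, ⟨e, he⟩, h4⟩ := hb m hmL
  have hmem : b m ∈ Submodule.span A (b '' {m | m ∈ leadSet L ∧ m.degree = d}) :=
    Submodule.subset_span ⟨m, ⟨hmL, hmd⟩, rfl⟩
  set q := F • p - (e * coeff m p) • b m with hq
  have hqL : q ∈ L := by
    rw [hq, smul_eq_C_mul, smul_eq_C_mul]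
    exact L.sub_mem (L.mul_mem_left _ hp) (L.mul_mem_left _ h1)
  have hqd : q.IsHomogeneous d := by
    rw [hmd] at h2
    exact (homogeneousSubmodule (Fin n) A d).sub_mem (Submodule.smul_mem _ _ hpd)
      (Submodule.smul_mem _ _ h2)
  have hk : ∃ k : ℕ, F ^ k • q ∈
      Submodule.span A (b '' {m | m ∈ leadSet L ∧ m.degree = d}) := by
    by_cases hq0 : q = 0
    · exact ⟨0, by simp [hq0]⟩
    refine ih _ ?_ q hqL hqd rfl
    have hcq : coeff (o.degree q) q ≠ 0 := o.coeff_degree_ne_zero_iff.2 hq0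
    apply lt_of_le_of_ne
    · by_cases hpp : coeff (o.degree q) p = 0
      · refine h4 _ fun hbb => hcq ?_
        rw [hq] at hpp hbb ⊢
        rw [coeff_sub, coeff_smul, coeff_smul, hpp, hbb]
        simp
      · exact hle _ hpp
    · intro heq
      rw [o.toSyn.injective heq] at hcq
      apply hcq
      rw [hq, coeff_sub, coeff_smul, coeff_smul, he, smul_eq_mul, smul_eq_mul]
      ring
  obtain ⟨k, hk⟩ := hk
  refine ⟨k + 1, ?_⟩
  have : F ^ (k + 1) • p = F ^ k • q + (F ^ k * (e * coeff m p)) • b m := by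
    rw [hq, smul_sub, smul_smul, smul_smul, pow_succ]
    abel
  rw [this]
  exact Submodule.add_mem _ hk (Submodule.smul_mem _ _ hmem)

theorem key (K : Type) [Field K] {A : Type*} [CommRing A] [IsDomain A] (n : ℕ)
    (L : Ideal (MvPolynomial (Fin n) A)) (hL : HomIdeal L) :
    ∃ F : A, F ≠ 0 ∧ ∃ h : ℕ → ℕ, ∀ φ : A →+* K, Function.Surjective φ → φ F ≠ 0 →
      ∀ d, hilb K n (L.map (MvPolynomial.map φ)) d = h d := by
  classical
  obtain ⟨F, hF, b, hb⟩ := exists_basis L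
  refine ⟨F, hF, fun d => Nat.card {m | m ∈ leadSet L ∧ m.degree = d}, ?_⟩
  intro φ hφ hφF d
  have hfin : {m | m ∈ leadSet L ∧ m.degree = d}.Finite := by
    refine Set.Finite.subset (Finsupp.finite_of_degree_le d) ?_
    rintro m ⟨_, h⟩
    exact h.le
  have := hfin.fintype
  set Λ := {m | m ∈ leadSet L ∧ m.degree = d} with hΛ
  let v : Λ → PS K n := fun m => MvPolynomial.map φ (b m)
  have hcoef : ∀ m : Λ, coeff m.1 (v m) ≠ 0 := by
    intro m h0
    obtain ⟨_, _, ⟨e, he⟩, _⟩ := hb m m.2.1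
    apply hφF
    rw [coeff_map] at h0
    rw [he, map_mul, h0, zero_mul]
  have hlead : ∀ m : Λ, LeadLE (v m) m.1 := by
    intro m m' h
    apply (hb m m.2.1).2.2.2
    intro h0
    apply h
    rw [coeff_map, h0, map_zero]
  have hli : LinearIndependent K v := by
    rw [Fintype.linearIndependent_iff]
    intro g hg
    by_contra hne
    push Not at hne
    obtain ⟨i, hi⟩ := hne
    obtain ⟨j, hj, hmax⟩ := Finset.exists_max_image (Finset.univ.filter fun i => g i ≠ 0)
      (fun m : Λ => (MonomialOrder.lex (σ := Fin n)).toSyn m.1) ⟨i, by simpa using hi⟩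
    have h1 := congrArg (coeff j.1) hg
    rw [coeff_sum, Finset.sum_eq_single j, coeff_smul, coeff_zero, smul_eq_mul] at h1
    · rcases mul_eq_zero.1 h1 with h | h
      · simp [h] at hj
      · exact hcoef j h
    · intro k _ hkj
      rw [coeff_smul, smul_eq_mul]
      by_cases hk : g k = 0
      · rw [hk, zero_mul]
      · by_contra hc
        have h2 := hlead k j.1 (right_ne_zero_of_mul hc)
        have h3 := hmax k (by simpa using hk)
        apply hkj
        exact Subtype.ext ((MonomialOrder.lex (σ := Fin n)).toSyn.injective (le_antisymm h3 h2))
    · simp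
  have hsurj : Function.Surjective (MvPolynomial.map (σ := Fin n) φ) := map_surjective φ hφ
  have hspan : Submodule.restrictScalars K (L.map (MvPolynomial.map φ)) ⊓
      homogeneousSubmodule (Fin n) K d = Submodule.span K (Set.range v) := by
    apply le_antisymm
    · rintro q ⟨hq, hqd⟩
      obtain ⟨p, hp, rfl⟩ := (Ideal.mem_map_iff_of_surjective _ hsurj).1 hq
      obtain ⟨k, hk⟩ := span_basis L F hF b hb d _ (hL p hp d)
        (homogeneousComponent_isHomogeneous _ _)
      have hmapc : MvPolynomial.map φ (homogeneousComponent d p) = MvPolynomial.map φ p := by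
        ext m
        rw [coeff_map, coeff_homogeneousComponent]
        split_ifs with h
        · rw [coeff_map]
        · rw [map_zero]
          symm
          by_contra hne
          apply h
          have := hqd hne
          rw [Finsupp.degree_eq_weight_one]
          exact this
      have hall : ∀ r ∈ Submodule.span A (b '' Λ),
          MvPolynomial.map φ r ∈ Submodule.span K (Set.range v) := by
        intro r hr
        induction hr using Submodule.span_induction with
        | mem x hx =>
          obtain ⟨m, hm, rfl⟩ := hx
          exact Submodule.subset_span ⟨⟨m, hm⟩, rfl⟩
        | zero => simp
        | add x y _ _ hx hy => rw [map_add]; exact Submodule.add_mem _ hx hy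
        | smul a x _ hx =>
          rw [smul_eq_C_mul, map_mul, map_C, ← smul_eq_C_mul]
          exact Submodule.smul_mem _ _ hx
      have h2 := hall _ hk
      rw [smul_eq_C_mul, map_mul, map_C, ← smul_eq_C_mul, hmapc, map_pow] at h2
      exact (Submodule.smul_mem_iff _ (pow_ne_zero k hφF)).1 h2
    · rw [Submodule.span_le]
      rintro _ ⟨m, rfl⟩
      obtain ⟨h1, h2, _⟩ := hb m m.2.1
      refine ⟨Ideal.mem_map_of_mem _ h1, ?_⟩
      rw [m.2.2] at h2
      exact h2.map φ
  rw [hilb, hspan, finrank_span_eq_card hli]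
  exact Nat.card_eq_fintype_card.symm

/-- The generic change of coordinates. -/
def genChange (K : Type) [Field K] (n : ℕ) :
    PS K n →ₐ[K] MvPolynomial (Fin n) (MvPolynomial (Fin n × Fin n) K) :=
  MvPolynomial.aeval (fun i => ∑ j, MvPolynomial.C (MvPolynomial.X (j, i)) * MvPolynomial.X j)

/-- Evaluation of the generic matrix at `g`. -/
def evalAt (K : Type) [Field K] (n : ℕ) (g : GL (Fin n) K) :
    MvPolynomial (Fin n × Fin n) K →+* K :=
  MvPolynomial.eval (fun p => (g : Matrix (Fin n) (Fin n) K) p.1 p.2)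

theorem evalAt_surj (K : Type) [Field K] (n : ℕ) (g : GL (Fin n) K) :
    Function.Surjective (evalAt K n g) := fun x => ⟨C x, by simp [evalAt]⟩

theorem map_genChange (K : Type) [Field K] (n : ℕ) (g : GL (Fin n) K) (J : Ideal (PS K n)) :
    (J.map (genChange K n).toRingHom).map (MvPolynomial.map (evalAt K n g)) =
      J.map (coordChange K n g) := by
  rw [Ideal.map_map]
  have : (MvPolynomial.map (evalAt K n g)).comp (genChange K n).toRingHom =
      (coordChange K n g).toRingHom := by
    apply MvPolynomial.ringHom_ext
    · intro r
      simp [genChange, coordChange, evalAt, MvPolynomial.algebraMap_apply]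
    · intro i
      simp [genChange, coordChange, evalAt, smul_eq_C_mul]
  rw [this]
  rfl

theorem map_const (K : Type) [Field K] (n : ℕ) (g : GL (Fin n) K) (I : Ideal (PS K n)) :
    (I.map (MvPolynomial.map (σ := Fin n)
      (C : K →+* MvPolynomial (Fin n × Fin n) K))).map (MvPolynomial.map (evalAt K n g)) = I := by
  rw [Ideal.map_map]
  have : (MvPolynomial.map (evalAt K n g)).comp (MvPolynomial.map (σ := Fin n)
      (C : K →+* MvPolynomial (Fin n × Fin n) K)) = RingHom.id _ := by
    apply MvPolynomial.ringHom_ext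
    · intro r
      simp [evalAt]
    · intro i
      simp
  rw [this, Ideal.map_id]

theorem hilb_inf_add_sup (K : Type) [Field K] (n : ℕ) (I J : Ideal (PS K n))
    (hI : HomIdeal I) (hJ : HomIdeal J) (d : ℕ) :
    hilb K n (I ⊓ J) d + hilb K n (I ⊔ J) d = hilb K n I d + hilb K n J d := by
  have : Module.Finite K (homogeneousSubmodule (Fin n) K d) :=
    Module.Finite.iff_fg.2 (homogeneousSubmodule_fg _ _ _)
  set H := homogeneousSubmodule (Fin n) K d with hH
  set I' := Submodule.restrictScalars K I ⊓ H with hI'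
  set J' := Submodule.restrictScalars K J ⊓ H with hJ'
  have : Module.Finite K I' := Submodule.finiteDimensional_of_le (inf_le_right : I' ≤ H)
  have : Module.Finite K J' := Submodule.finiteDimensional_of_le (inf_le_right : J' ≤ H)
  have h1 : Submodule.restrictScalars K (I ⊓ J) ⊓ H = I' ⊓ J' := by
    ext x
    simp only [hI', hJ', Submodule.mem_inf, Submodule.restrictScalars_mem]
    tauto
  have h2 : Submodule.restrictScalars K (I ⊔ J) ⊓ H = I' ⊔ J' := by
    apply le_antisymm
    · rintro x ⟨hx, hxd⟩
      obtain ⟨y, hy, z, hz, rfl⟩ := Submodule.mem_sup.1 hx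
      have : homogeneousComponent d (y + z) = y + z := by
        rw [homogeneousComponent_of_mem hxd, if_pos rfl]
      rw [← this, map_add]
      exact Submodule.add_mem_sup ⟨hI y hy d, homogeneousComponent_mem d y⟩
        ⟨hJ z hz d, homogeneousComponent_mem d z⟩
    · apply sup_le
      · exact inf_le_inf_right _ (fun x hx => (le_sup_left : I ≤ I ⊔ J) hx)
      · exact inf_le_inf_right _ (fun x hx => (le_sup_right : J ≤ I ⊔ J) hx)
  have h3 := Submodule.finrank_sup_add_finrank_inf_eq I' J'
  rw [← h1, ← h2] at h3
  rw [add_comm]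
  exact h3

end helpers

/-- **Lemma 2.1** (Caviglia–Murai): for homogeneous ideals `I, J ⊆ S` and a general change of
coordinates `g ∈ GL_n(K)`, the Hilbert functions of `I ∩ g(J)` and of `I·g(J)` are well
defined: there are functions `h₁ h₂ : ℕ → ℕ` and a nonempty Zariski open subset of `GL_n(K)`
on which `H(I ∩ g(J), d) = h₁ d` and `H(I·g(J), d) = h₂ d` for all `d`. -/
theorem hilbert_function_of_general_intersection_and_product_well_defined
    (K : Type) [Field K] [Infinite K] (n : ℕ)
    (I J : Ideal (PS K n)) (hI : IsHomog K n I) (hJ : IsHomog K n J) :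
    ∃ h₁ h₂ : ℕ → ℕ, generally K n (fun g =>
      (∀ d : ℕ, hilb K n (I ⊓ Ideal.map (coordChange K n g) J) d = h₁ d) ∧
      (∀ d : ℕ, hilb K n (I * Ideal.map (coordChange K n g) J) d = h₂ d)) := by
  have hG : HomIdeal (J.map (genChange K n).toRingHom) := by
    refine homIdeal_map hJ _ fun f d hf => ?_
    have := hf.aeval (n := 1) (fun i => ∑ j, MvPolynomial.C
      (MvPolynomial.X (R := K) ((j, i) : Fin n × Fin n)) * MvPolynomial.X (σ := Fin n) j) ?_
    · rw [one_mul] at this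
      exact this
    · intro i
      refine IsHomogeneous.sum _ _ _ fun j _ => ?_
      have := (isHomogeneous_C (Fin n) (MvPolynomial.X (R := K) ((j, i) : Fin n × Fin n))).mul
        (isHomogeneous_X (MvPolynomial (Fin n × Fin n) K) j)
      rwa [zero_add] at this
  have hC : HomIdeal (I.map (MvPolynomial.map (σ := Fin n)
      (C : K →+* MvPolynomial (Fin n × Fin n) K))) :=
    homIdeal_map hI _ fun f d hf => hf.map _
  obtain ⟨F₁, hF₁, k₁, hk₁⟩ := key K n _ hG
  obtain ⟨F₂, hF₂, k₂, hk₂⟩ := key K n _ (homIdeal_sup hC hG)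
  obtain ⟨F₃, hF₃, k₃, hk₃⟩ := key K n _ (homIdeal_mul hC hG)
  refine ⟨fun d => hilb K n I d + k₁ d - k₂ d, k₃, F₁ * F₂ * F₃,
    mul_ne_zero (mul_ne_zero hF₁ hF₂) hF₃, fun g hg => ?_⟩
  rw [map_mul, map_mul] at hg
  have e3 : evalAt K n g F₃ ≠ 0 := right_ne_zero_of_mul hg
  have e2 : evalAt K n g F₂ ≠ 0 := right_ne_zero_of_mul (left_ne_zero_of_mul hg)
  have e1 : evalAt K n g F₁ ≠ 0 := left_ne_zero_of_mul (left_ne_zero_of_mul hg)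
  have r1 := hk₁ _ (evalAt_surj K n g) e1
  have r2 := hk₂ _ (evalAt_surj K n g) e2
  have r3 := hk₃ _ (evalAt_surj K n g) e3
  rw [map_genChange] at r1
  rw [Ideal.map_sup, map_genChange, map_const] at r2
  rw [Ideal.map_mul, map_genChange, map_const] at r3
  refine ⟨fun d => ?_, r3⟩
  have hgJ : HomIdeal (J.map (coordChange K n g)) := by
    rw [← map_genChange]
    exact homIdeal_map hG _ fun f d hf => hf.map _
  have := hilb_inf_add_sup K n I _ hI hgJ d
  rw [r1, r2] at this
  exact Nat.eq_sub_of_add_eq this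


end
end

section
/- Let K be an infinite field, S = K[x_1,...,x_n], M a finitely generated graded S-module, and J ⊆ S a homogeneous ideal. Then for a general change of coordinates g ∈ GL_n(K), one has dim_K Tor_i^S(M, S/g(J))_j ≤ dim_K Tor_i^S(M, S/J)_j for all i ≥ 0 and all degrees j. -/
open MvPolynomial TensorProduct CategoryTheory

noncomputable section

variable (K : Type) [Field K] (n : ℕ)

/-- The standard grading of `S = K[x_1,...,x_n]`, extended to `ℤ` (zero in negative
degrees). -/
def polyGrade (d : ℤ) : Submodule K (PS K n) :=
  if 0 ≤ d then homogeneousSubmodule (Fin n) K d.toNat else ⊥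

/-- The degree `d` component of the (internal) tensor-product grading on `A ⊗[K] B`. -/
def tensorGrade {A B : Type} [AddCommGroup A] [Module K A] [AddCommGroup B] [Module K B]
    (GA : ℤ → Submodule K A) (GB : ℤ → Submodule K B) (d : ℤ) :
    Submodule K (A ⊗[K] B) :=
  ⨆ p : ℤ, LinearMap.range (TensorProduct.map (GA p).subtype (GB (d - p)).subtype)

variable (N : Type) [AddCommGroup N] [Module K N] [Module (PS K n) N]
  [IsScalarTower K (PS K n) N]

/-- The tower of `K`-vector spaces `D_i = S^{⊗ i} ⊗_K N` appearing in the bar complex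
`M ⊗_K S^{⊗ i} ⊗_K N`, which computes `Tor^S_i(M, N)`. -/
def barD : ℕ → ModuleCat K
  | 0 => ModuleCat.of K N
  | (i + 1) => ModuleCat.of K (PS K n ⊗[K] (barD i))

/-- The internal `ℤ`-grading on `D_i = S^{⊗ i} ⊗_K N` induced by the standard grading of
`S` and a grading `GN` of `N`. -/
def barDGrade (GN : ℤ → Submodule K N) : (i : ℕ) → ℤ → Submodule K (barD K n N i)
  | 0 => GN
  | (i + 1) => tensorGrade K (polyGrade K n) (barDGrade GN i)

/-- Scalar multiplication `S → N → N` as a `K`-bilinear map. -/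
def smulBilin : PS K n →ₗ[K] N →ₗ[K] N :=
  LinearMap.mk₂ K (fun s x => s • x)
    (fun s₁ s₂ x => add_smul s₁ s₂ x)
    (fun c s x => smul_assoc c s x)
    (fun s x y => smul_add s x y)
    (fun c s x => (smul_comm c s x).symm)

/-- The "contraction" part of the bar differential, `c_i : D_{i+1} → D_i`, defined
recursively by `c_0(s ⊗ x) = s • x` and
`c_{i+1}(s ⊗ s' ⊗ t) = (s s') ⊗ t - s ⊗ c_i(s' ⊗ t)`. -/
def barC : (i : ℕ) → ((barD K n N (i + 1)) →ₗ[K] (barD K n N i))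
  | 0 => TensorProduct.lift (smulBilin K n N)
  | (i + 1) =>
      (TensorProduct.map (LinearMap.mul' K (PS K n)) LinearMap.id).comp
        (TensorProduct.assoc K (PS K n) (PS K n) (barD K n N i)).symm.toLinearMap
      - TensorProduct.map LinearMap.id (barC i)

variable (M : Type) [AddCommGroup M] [Module K M] [Module (PS K n) M]
  [IsScalarTower K (PS K n) M]

/-- Right scalar multiplication `M ⊗[K] S → M` as a `K`-linear map. -/
def smulMapM : M ⊗[K] PS K n →ₗ[K] M :=
  TensorProduct.lift (LinearMap.mk₂ K (fun m s => s • m)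
    (fun m₁ m₂ s => smul_add s m₁ m₂)
    (fun c m s => smul_comm s c m)
    (fun m s₁ s₂ => add_smul s₁ s₂ m)
    (fun c m s => smul_assoc c s m))

/-- The bar differential `b_i : M ⊗ D_{i+1} → M ⊗ D_i`,
`b(m ⊗ s ⊗ t) = (s • m) ⊗ t - m ⊗ c_i(s ⊗ t)`.  The complex
`⋯ → M ⊗_K S^{⊗ i} ⊗_K N → ⋯ → M ⊗_K S ⊗_K N → M ⊗_K N → 0`
is the bar complex `M ⊗_S Bar(S, N)`, whose `i`-th homology is `Tor^S_i(M, N)`;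
it is a complex of graded vector spaces with degree-preserving differentials. -/
def barB (i : ℕ) : (M ⊗[K] (barD K n N (i + 1))) →ₗ[K] (M ⊗[K] (barD K n N i)) :=
  (TensorProduct.map (smulMapM K n M) LinearMap.id).comp
      (TensorProduct.assoc K M (PS K n) (barD K n N i)).symm.toLinearMap
  - TensorProduct.map LinearMap.id (barC K n N i)

/-- `dim_K Tor_i^S(M, N)_j`, the dimension of the degree-`j` component of the graded module
`Tor_i^S(M, N)` for graded modules `M`, `N`: it is computed as the homology of the degree-`j`
strand of the bar complex, namely `dim (ker b_i)_j - dim (im b_{i+1})_j`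
(for `i = 0`, `dim (M ⊗_K N)_j - dim (im b_1)_j`). -/
def torStrandDim (GM : ℤ → Submodule K M) (GN : ℤ → Submodule K N) : ℕ → ℤ → ℕ
  | 0, j =>
      Module.finrank K ↥(tensorGrade K GM (barDGrade K n N GN 0) j) -
        Module.finrank K
          ↥(LinearMap.range (barB K n N M 0) ⊓ tensorGrade K GM (barDGrade K n N GN 0) j)
  | (i + 1), j =>
      Module.finrank K
          ↥(LinearMap.ker (barB K n N M i) ⊓
              tensorGrade K GM (barDGrade K n N GN (i + 1)) j) -
        Module.finrank K
          ↥(LinearMap.range (barB K n N M (i + 1)) ⊓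
              tensorGrade K GM (barDGrade K n N GN (i + 1)) j)

/-- The quotient grading on `S/J`. -/
def quotGrade (J : Ideal (PS K n)) : ℤ → Submodule K (PS K n ⧸ J) := fun d =>
  (polyGrade K n d).map (Ideal.Quotient.mkₐ K J).toLinearMap

/-- The grading on an ideal `I ⊆ S` viewed as an `S`-module. -/
def idealGrade (I : Ideal (PS K n)) : ℤ → Submodule K ↥I := fun d =>
  (polyGrade K n d).comap ((Submodule.subtype I).restrictScalars K)

/-- `dim_K Tor_i^S(S/I, S/J)_j`. -/
def torQQ (I J : Ideal (PS K n)) (i : ℕ) (j : ℤ) : ℕ :=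
  torStrandDim K n (PS K n ⧸ J) (PS K n ⧸ I) (quotGrade K n I) (quotGrade K n J) i j

/-- `dim_K Tor_i^S(I, S/J)_j`. -/
def torIQ (I J : Ideal (PS K n)) (i : ℕ) (j : ℤ) : ℕ :=
  torStrandDim K n (PS K n ⧸ J) ↥I (idealGrade K n I) (quotGrade K n J) i j


end

noncomputable section
open MvPolynomial TensorProduct CategoryTheory
namespace TG
section graded
variable {K : Type} [Field K]

/-- A family of subspaces is a grading: it spans and admits a coaction. -/
def IsGr {A : Type} [AddCommGroup A] [Module K A] (G : ℤ → Submodule K A) : Prop :=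
  (⨆ d, G d = ⊤) ∧ ∃ δ : A →ₗ[K] (ℤ →₀ A), ∀ d, ∀ x ∈ G d, δ x = Finsupp.single d x

variable {A B C : Type} [AddCommGroup A] [Module K A] [AddCommGroup B] [Module K B]
  [AddCommGroup C] [Module K C]

theorem ind {G : ℤ → Submodule K A} (hG : ⨆ d, G d = ⊤) {P : A → Prop}
    (hP : ∀ d, ∀ x ∈ G d, P x) (h0 : P 0) (ha : ∀ x y, P x → P y → P (x + y)) (x : A) : P x := by
  have hx : x ∈ ⨆ d, G d := by rw [hG]; trivial
  exact Submodule.iSup_induction G (motive := P) hx hP h0 ha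

theorem IsGr.of_proj {G : ℤ → Submodule K A} (hG : ⨆ d, G d = ⊤)
    (π : ℤ → A →ₗ[K] A) (hπ : ∀ d e, ∀ x ∈ G e, π d x = if e = d then x else 0) : IsGr G := by
  refine ⟨hG, ?_⟩
  have hfin : ∀ x : A, (Function.support (fun d => π d x)).Finite := by
    intro x
    refine ind hG (P := fun x => (Function.support (fun d => π d x)).Finite) ?_ ?_ ?_ x
    · intro d x hx
      refine (Set.finite_singleton d).subset ?_
      intro e he
      simp only [Function.mem_support, hπ e d x hx] at he
      by_contra h
      exact he (if_neg (fun h' => h h'.symm))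
    · simp
    · intro x y hx hy
      refine (hx.union hy).subset ?_
      intro e he
      simp only [Function.mem_support, map_add, Set.mem_union] at he ⊢
      by_contra h
      push Not at h
      exact he (by rw [h.1, h.2, add_zero])
  refine ⟨{ toFun := fun x => Finsupp.ofSupportFinite (fun d => π d x) (hfin x)
            map_add' := ?_
            map_smul' := ?_ }, ?_⟩
  · intro x y; ext d; exact map_add (π d) x y
  · intro c x; ext d; exact map_smul (π d) c x
  · intro d x hx; ext e
    rw [Finsupp.single_apply]
    exact hπ e d x hx

theorem IsGr.exists_proj {G : ℤ → Submodule K A} (hG : IsGr G) :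
    ∃ π : ℤ → A →ₗ[K] A, (∀ d e, ∀ x ∈ G e, π d x = if e = d then x else 0) ∧
      (∀ d x, π d x ∈ G d) ∧ (∀ x, ∃ s : Finset ℤ, ∑ d ∈ s, π d x = x) := by
  obtain ⟨h, δ, hδ⟩ := hG
  refine ⟨fun d => (Finsupp.lapply d).comp δ, ?_, ?_, ?_⟩
  · intro d e x hx
    simp [hδ e x hx, Finsupp.single_apply]
  · intro d x
    refine ind h (P := fun x => ((Finsupp.lapply d).comp δ) x ∈ G d) ?_ ?_ ?_ x
    · intro e x hx
      simp only [LinearMap.comp_apply, hδ e x hx, Finsupp.lapply_apply, Finsupp.single_apply]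
      split_ifs with h
      · exact h ▸ hx
      · exact zero_mem _
    · simp
    · intro x y hx hy; rw [map_add]; exact add_mem hx hy
  · intro x
    refine ⟨(δ x).support, ?_⟩
    have key : ∀ x, (δ x).sum (fun _ y => y) = x := by
      intro x
      refine ind h (P := fun x => (δ x).sum (fun _ y => y) = x) ?_ ?_ ?_ x
      · intro d x hx; rw [hδ d x hx]; simp
      · simp
      · intro x y hx hy
        rw [map_add, Finsupp.sum_add_index' (by simp) (by simp), hx, hy]
    exact key x

theorem IsGr.strict {GA : ℤ → Submodule K A} {GB : ℤ → Submodule K B} (hA : IsGr GA) (hB : IsGr GB)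
    (f : A →ₗ[K] B) (hf : ∀ d, ∀ x ∈ GA d, f x ∈ GB d) (d : ℤ) :
    LinearMap.range f ⊓ GB d = (GA d).map f := by
  apply le_antisymm
  · rintro _ ⟨⟨a, rfl⟩, h⟩
    obtain ⟨π, h1, h2, -⟩ := hA.exists_proj
    obtain ⟨π', h1', h2', -⟩ := hB.exists_proj
    refine ⟨π d a, h2 d a, ?_⟩
    have key : ∀ a, f (π d a) = π' d (f a) := by
      intro a
      refine ind hA.1 (P := fun a => f (π d a) = π' d (f a)) ?_ ?_ ?_ a
      · intro e x hx
        rw [h1 d e x hx, h1' d e _ (hf e x hx)]; split_ifs <;> simp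
      · simp
      · intro x y hx hy; simp only [map_add, hx, hy]
    rw [key, h1' d d _ h, if_pos rfl]
  · rintro _ ⟨a, ha, rfl⟩
    exact ⟨⟨a, rfl⟩, hf d a ha⟩

theorem IsGr.strict_surj {GA : ℤ → Submodule K A} {GB : ℤ → Submodule K B} (hA : IsGr GA)
    (hB : IsGr GB) (f : A →ₗ[K] B) (hf : ∀ d, ∀ x ∈ GA d, f x ∈ GB d)
    (hs : Function.Surjective f) (d : ℤ) : (GA d).map f = GB d := by
  rw [← hA.strict hB f hf, LinearMap.range_eq_top.2 hs, top_inf_eq]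

theorem IsGr.strict_inj {GA : ℤ → Submodule K A} {GB : ℤ → Submodule K B} (hA : IsGr GA)
    (hB : IsGr GB) (f : A →ₗ[K] B) (hf : ∀ d, ∀ x ∈ GA d, f x ∈ GB d)
    (hs : Function.Injective f) (d : ℤ) (x : A) (hx : f x ∈ GB d) : x ∈ GA d := by
  have : f x ∈ (GA d).map f := by
    rw [← hA.strict hB f hf]; exact ⟨⟨x, rfl⟩, hx⟩
  obtain ⟨y, hy, h⟩ := this
  exact hs h ▸ hy

theorem tensorGrade_le (GA : ℤ → Submodule K A) (GB : ℤ → Submodule K B) (d : ℤ)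
    (P : Submodule K (A ⊗[K] B))
    (h : ∀ p q, p + q = d → ∀ a ∈ GA p, ∀ b ∈ GB q, a ⊗ₜ[K] b ∈ P) :
    tensorGrade K GA GB d ≤ P := by
  refine iSup_le fun p => ?_
  rintro _ ⟨t, rfl⟩
  induction t using TensorProduct.induction_on with
  | zero => simp
  | tmul a b =>
    rw [TensorProduct.map_tmul]
    exact h p (d - p) (by ring) _ a.2 _ b.2
  | add x y hx hy => rw [map_add]; exact add_mem hx hy

theorem tmul_mem {GA : ℤ → Submodule K A} {GB : ℤ → Submodule K B} {p q d : ℤ} (h : p + q = d)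
    {a : A} {b : B} (ha : a ∈ GA p) (hb : b ∈ GB q) : a ⊗ₜ[K] b ∈ tensorGrade K GA GB d := by
  refine Submodule.mem_iSup_of_mem p ?_
  have : q = d - p := by omega
  subst this
  exact ⟨(⟨a, ha⟩ : GA p) ⊗ₜ (⟨b, hb⟩ : GB (d - p)), rfl⟩

theorem IsGr.tensor {GA : ℤ → Submodule K A} {GB : ℤ → Submodule K B} (hA : IsGr GA)
    (hB : IsGr GB) : IsGr (tensorGrade K GA GB) := by
  obtain ⟨hA1, δA, hA2⟩ := hA
  obtain ⟨hB1, δB, hB2⟩ := hB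
  refine ⟨?_, ?_⟩
  · rw [eq_top_iff]
    rintro t -
    induction t using TensorProduct.induction_on with
    | zero => simp
    | tmul a b =>
      refine ind hA1 (P := fun a => a ⊗ₜ[K] b ∈ ⨆ d, tensorGrade K GA GB d) ?_ ?_ ?_ a
      · intro p a ha
        refine ind hB1 (P := fun b => a ⊗ₜ[K] b ∈ ⨆ d, tensorGrade K GA GB d) ?_ ?_ ?_ b
        · intro q b hb
          exact Submodule.mem_iSup_of_mem (p + q) (tmul_mem rfl ha hb)
        · simp
        · intro x y hx hy; rw [TensorProduct.tmul_add]; exact add_mem hx hy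
      · simp
      · intro x y hx hy; rw [TensorProduct.add_tmul]; exact add_mem hx hy
    | add x y hx hy => exact add_mem hx hy
  · refine ⟨(Finsupp.lmapDomain (A ⊗[K] B) K (fun p : ℤ × ℤ => p.1 + p.2)).comp
      ((finsuppTensorFinsupp K K A B ℤ ℤ).toLinearMap.comp (TensorProduct.map δA δB)), ?_⟩
    intro d x hx
    refine tensorGrade_le GA GB d (LinearMap.eqLocus _ (Finsupp.lsingle d)) ?_ hx
    intro p q hpq a ha b hb
    simp [LinearMap.mem_eqLocus, hA2 p a ha, hB2 q b hb, hpq]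

theorem tensorGrade_map {A' B' : Type} [AddCommGroup A'] [Module K A'] [AddCommGroup B']
    [Module K B'] {GA : ℤ → Submodule K A} {GB : ℤ → Submodule K B}
    {GA' : ℤ → Submodule K A'} {GB' : ℤ → Submodule K B'} (f : A →ₗ[K] A') (g : B →ₗ[K] B')
    (hf : ∀ d, ∀ x ∈ GA d, f x ∈ GA' d) (hg : ∀ d, ∀ x ∈ GB d, g x ∈ GB' d) (d : ℤ) :
    ∀ x ∈ tensorGrade K GA GB d, TensorProduct.map f g x ∈ tensorGrade K GA' GB' d := by
  intro x hx
  refine tensorGrade_le GA GB d ((tensorGrade K GA' GB' d).comap (TensorProduct.map f g)) ?_ hx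
  intro p q hpq a ha b hb
  exact tmul_mem hpq (hf p a ha) (hg q b hb)

/-- locally finite and bounded below -/
def IsLF (G : ℤ → Submodule K A) : Prop :=
  (∀ d, FiniteDimensional K (G d)) ∧ ∃ d0 : ℤ, ∀ d < d0, G d = ⊥

theorem IsLF.tensor {GA : ℤ → Submodule K A} {GB : ℤ → Submodule K B} (hA : IsLF GA)
    (hB : IsLF GB) : IsLF (tensorGrade K GA GB) := by
  obtain ⟨hA, a0, ha0⟩ := hA
  obtain ⟨hB, b0, hb0⟩ := hB
  have key : ∀ d, tensorGrade K GA GB d ≤ ⨆ p ∈ Finset.Icc a0 (d - b0),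
      LinearMap.range (TensorProduct.map (GA p).subtype (GB (d - p)).subtype) := by
    intro d
    refine tensorGrade_le GA GB d _ ?_
    intro p q hpq a ha b hb
    by_cases hp : p < a0
    · rw [ha0 p hp] at ha
      rw [(Submodule.mem_bot K).1 ha, TensorProduct.zero_tmul]; exact zero_mem _
    by_cases hq : q < b0
    · rw [hb0 q hq] at hb
      rw [(Submodule.mem_bot K).1 hb, TensorProduct.tmul_zero]; exact zero_mem _
    refine Submodule.mem_iSup_of_mem p (Submodule.mem_iSup_of_mem
      (Finset.mem_Icc.2 ⟨by omega, by omega⟩) ?_)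
    have : q = d - p := by omega
    subst this
    exact ⟨(⟨a, ha⟩ : GA p) ⊗ₜ (⟨b, hb⟩ : GB (d - p)), rfl⟩
  refine ⟨fun d => ?_, a0 + b0, fun d hd => ?_⟩
  · have := fun p => hA p
    have := fun p => hB p
    have h := key d
    rw [← Finset.sup_eq_iSup] at h
    exact Submodule.finiteDimensional_of_le h
  · have h := key d
    rw [Finset.Icc_eq_empty (by omega)] at h
    simpa using h

end graded
end TG
end

noncomputable section
open MvPolynomial TensorProduct CategoryTheory
namespace TG
section bar
variable {K : Type} [Field K] {n : ℕ}
variable (N : Type) [AddCommGroup N] [Module K N]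

/-- `s ⊗ t` in the bar tower. -/
def tm (i : ℕ) : PS K n →ₗ[K] barD K n N i →ₗ[K] barD K n N (i + 1) :=
  TensorProduct.mk K (PS K n) (barD K n N i)

variable {N} in
theorem tm_ind {i : ℕ} {P : barD K n N (i + 1) → Prop} (h0 : P 0)
    (h : ∀ s t, P (tm N i s t)) (ha : ∀ x y, P x → P y → P (x + y)) (x : barD K n N (i + 1)) :
    P x := by
  exact TensorProduct.induction_on (motive := P) x h0 h ha

variable {N} in
theorem D_ext {i : ℕ} {X : Type} [AddCommGroup X] [Module K X]
    {f g : barD K n N (i + 1) →ₗ[K] X} (h : ∀ s t, f (tm N i s t) = g (tm N i s t)) : f = g := by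
  exact TensorProduct.ext' h

def Dlift (i : ℕ) {X : Type} [AddCommGroup X] [Module K X] (f : PS K n →ₗ[K] barD K n N i →ₗ[K] X) :
    barD K n N (i + 1) →ₗ[K] X := TensorProduct.lift f

theorem Dlift_tm (i : ℕ) {X : Type} [AddCommGroup X] [Module K X]
    (f : PS K n →ₗ[K] barD K n N i →ₗ[K] X) (s t) : Dlift N i f (tm N i s t) = f s t :=
  TensorProduct.lift.tmul _ _

/-- left multiplication -/
def lm (i : ℕ) (s : PS K n) : barD K n N (i + 1) →ₗ[K] barD K n N (i + 1) :=
  Dlift N i ((tm N i).comp (LinearMap.mulLeft K s))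

theorem lm_tm (i : ℕ) (s s' : PS K n) (t) : lm N i s (tm N i s' t) = tm N i (s * s') t := by
  rw [lm, Dlift_tm]; rfl

theorem lm_lm (i : ℕ) (s s' : PS K n) (y) : lm N i s (lm N i s' y) = lm N i (s * s') y := by
  refine tm_ind (P := fun y => lm N i s (lm N i s' y) = lm N i (s * s') y) ?_ ?_ ?_ y
  · simp
  · intro a t; simp only [lm_tm, mul_assoc]
  · intro x y hx hy; simp only [map_add, hx, hy]

variable (M : Type) [AddCommGroup M] [Module K M] [Module (PS K n) M]
  [IsScalarTower K (PS K n) M]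

theorem smulMapM_tmul (m : M) (s : PS K n) : smulMapM K n M (m ⊗ₜ s) = s • m := by
  simp [smulMapM]

variable {M}
/-- `s ⊗ t ↦ s m ⊗ t` -/
def am (i : ℕ) (m : M) : barD K n N (i + 1) →ₗ[K] M ⊗[K] barD K n N i :=
  Dlift N i ((TensorProduct.mk K M (barD K n N i)).comp
    (((smulMapM K n M)).comp (TensorProduct.mk K M (PS K n) m)))

theorem am_tm (i : ℕ) (m : M) (s : PS K n) (t) : am N i m (tm N i s t) = (s • m) ⊗ₜ[K] t := by
  rw [am, Dlift_tm]
  simp [smulMapM_tmul]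

theorem am_lm (i : ℕ) (m : M) (s : PS K n) (y) : am N i m (lm N i s y) = am N i (s • m) y := by
  refine tm_ind (P := fun y => am N i m (lm N i s y) = am N i (s • m) y) ?_ ?_ ?_ y
  · simp
  · intro a t
    rw [lm_tm, am_tm, am_tm, mul_comm, mul_smul]
  · intro x y hx hy; simp only [map_add, hx, hy]

variable [Module (PS K n) N] [IsScalarTower K (PS K n) N]

theorem barC_zero (s : PS K n) (x : N) : barC K n N 0 (tm N 0 s x) = s • x := by
  change TensorProduct.lift (smulBilin K n N) (s ⊗ₜ x) = _
  simp [smulBilin]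

theorem barC_succ (i : ℕ) (s : PS K n) (y) :
    barC K n N (i + 1) (tm N (i + 1) s y) = lm N i s y - tm N i s (barC K n N i y) := by
  refine tm_ind (P := fun y => barC K n N (i + 1) (tm N (i + 1) s y) =
    lm N i s y - tm N i s (barC K n N i y)) ?_ ?_ ?_ y
  · simp
  · intro a t
    rw [lm_tm]
    rfl
  · intro x y hx hy; simp only [map_add, hx, hy]; abel

theorem barB_tmul (i : ℕ) (m : M) (y : barD K n N (i + 1)) :
    barB K n N M i (m ⊗ₜ y) = am N i m y - m ⊗ₜ (barC K n N i y) := by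
  refine tm_ind (P := fun y => barB K n N M i (m ⊗ₜ y) =
    am N i m y - m ⊗ₜ (barC K n N i y)) ?_ ?_ ?_ y
  · simp
  · intro a t
    rw [am_tm, ← smulMapM_tmul]
    rfl
  · intro x y hx hy; simp only [map_add, tmul_add, hx, hy]; abel

theorem cc (i : ℕ) : ∀ (s : PS K n) (t : barD K n N (i + 1)),
    barC K n N i (tm N i s (barC K n N i t)) = barC K n N i (lm N i s t) := by
  induction i with
  | zero =>
    intro s t
    refine tm_ind (P := fun t => barC K n N 0 (tm N 0 s (barC K n N 0 t)) =
      barC K n N 0 (lm N 0 s t)) ?_ ?_ ?_ t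
    · simp
    · intro a x
      rw [lm_tm]
      let x' : N := x
      exact (congrArg (fun y => barC K n N 0 (tm N 0 s y)) (barC_zero N a x')).trans
        ((barC_zero N s (a • x')).trans
          ((mul_smul s a x').symm.trans (barC_zero N (s * a) x').symm))
    · intro x y hx hy; simp only [map_add, hx, hy]
  | succ i ih =>
    intro s t
    refine tm_ind (P := fun t => barC K n N (i + 1) (tm N (i + 1) s (barC K n N (i + 1) t)) =
      barC K n N (i + 1) (lm N (i + 1) s t)) ?_ ?_ ?_ t
    · simp
    · intro s' t'
      have h : barC K n N i (barC K n N (i + 1) (tm N (i + 1) s' t')) = 0 := by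
        rw [barC_succ, map_sub, ih, sub_self]
      rw [barC_succ, h, map_zero, sub_zero, lm_tm, barC_succ, barC_succ, map_sub, lm_lm, lm_tm]
    · intro x y hx hy; simp only [map_add, hx, hy]

theorem bb (i : ℕ) (z : M ⊗[K] barD K n N (i + 2)) :
    barB K n N M i (barB K n N M (i + 1) z) = 0 := by
  induction z using TensorProduct.induction_on with
  | zero => simp
  | tmul m y =>
    refine tm_ind (P := fun y => barB K n N M i (barB K n N M (i + 1) (m ⊗ₜ y)) = 0) ?_ ?_ ?_ y
    · simp
    · intro s t
      rw [barB_tmul, am_tm, barC_succ, map_sub, tmul_sub, map_sub, barB_tmul, barB_tmul, barB_tmul,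
        am_lm, am_tm, cc]
      abel
    · intro x y hx hy; simp only [map_add, tmul_add, hx, hy, add_zero]
  | add x y hx hy => simp only [map_add, hx, hy, add_zero]

/-! functoriality -/
section funct
variable {N}
variable {N' : Type} [AddCommGroup N'] [Module K N'] [Module (PS K n) N']
  [IsScalarTower K (PS K n) N'] (f : N →ₗ[PS K n] N')

def Dm : (i : ℕ) → (barD K n N i →ₗ[K] barD K n N' i)
  | 0 => f.restrictScalars K
  | (i + 1) => LinearMap.lTensor (PS K n) (Dm i)

theorem Dm_zero (x : N) : Dm f 0 x = f x := rfl

theorem Dm_tm (i : ℕ) (s : PS K n) (t) : Dm f (i + 1) (tm N i s t) = tm N' i s (Dm f i t) := rfl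

theorem Dm_lm (i : ℕ) (s : PS K n) (t) : Dm f (i + 1) (lm N i s t) = lm N' i s (Dm f (i + 1) t) := by
  refine tm_ind (P := fun t => Dm f (i + 1) (lm N i s t) = lm N' i s (Dm f (i + 1) t)) ?_ ?_ ?_ t
  · simp
  · intro a t
    rw [lm_tm, Dm_tm, Dm_tm, lm_tm]
  · intro x y hx hy; simp only [map_add, hx, hy]

theorem Dm_barC (i : ℕ) : ∀ t, Dm f i (barC K n N i t) = barC K n N' i (Dm f (i + 1) t) := by
  induction i with
  | zero =>
    intro t
    refine tm_ind (P := fun t => Dm f 0 (barC K n N 0 t) = barC K n N' 0 (Dm f (0 + 1) t)) ?_ ?_ ?_ t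
    · simp
    · intro s x
      rw [Dm_tm]
      let x' : N := x
      exact (congrArg (Dm f 0) (barC_zero N s x')).trans
        ((map_smul f s x').trans (barC_zero N' s (f x')).symm)
    · intro x y hx hy; simp only [map_add, hx, hy]
  | succ i ih =>
    intro t
    refine tm_ind (P := fun t => Dm f (i + 1) (barC K n N (i + 1) t) =
      barC K n N' (i + 1) (Dm f (i + 1 + 1) t)) ?_ ?_ ?_ t
    · simp
    · intro s x
      rw [Dm_tm, barC_succ, barC_succ, map_sub, Dm_lm, Dm_tm, ih]
    · intro x y hx hy; simp only [map_add, hx, hy]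

variable (M) in
/-- functoriality of the complex -/
def Cm (i : ℕ) : M ⊗[K] barD K n N i →ₗ[K] M ⊗[K] barD K n N' i := LinearMap.lTensor M (Dm f i)

theorem Cm_tmul (i : ℕ) (m : M) (t) : Cm M f i (m ⊗ₜ t) = m ⊗ₜ (Dm f i t) := rfl

theorem Cm_am (i : ℕ) (m : M) (t) : Cm M f i (am N i m t) = am N' i m (Dm f (i + 1) t) := by
  refine tm_ind (P := fun t => Cm M f i (am N i m t) = am N' i m (Dm f (i + 1) t)) ?_ ?_ ?_ t
  · simp
  · intro a t
    rw [am_tm, Dm_tm, am_tm, Cm_tmul]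
  · intro x y hx hy; simp only [map_add, hx, hy]

theorem Cm_barB (i : ℕ) (z) : Cm M f i (barB K n N M i z) = barB K n N' M i (Cm M f (i + 1) z) := by
  induction z using TensorProduct.induction_on with
  | zero => simp
  | tmul m y => rw [barB_tmul, Cm_tmul, barB_tmul, map_sub, Cm_am, Cm_tmul, Dm_barC]
  | add x y hx hy => simp only [map_add, hx, hy]

theorem Dm_surj (hf : Function.Surjective f) (i : ℕ) : Function.Surjective (Dm f i) := by
  induction i with
  | zero => exact hf
  | succ i ih => exact LinearMap.lTensor_surjective _ ih

theorem Dm_inj (hf : Function.Injective f) (i : ℕ) : Function.Injective (Dm f i) := by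
  induction i with
  | zero => exact hf
  | succ i ih => exact Module.Flat.lTensor_preserves_injective_linearMap (M := PS K n) _ ih

theorem Cm_surj (hf : Function.Surjective f) (i : ℕ) : Function.Surjective (Cm M f i) :=
  LinearMap.lTensor_surjective _ (Dm_surj f hf i)

theorem Cm_inj (hf : Function.Injective f) (i : ℕ) : Function.Injective (Cm M f i) :=
  Module.Flat.lTensor_preserves_injective_linearMap _ (Dm_inj f hf i)

variable {N'' : Type} [AddCommGroup N''] [Module K N''] [Module (PS K n) N'']
  [IsScalarTower K (PS K n) N''] (q : N' →ₗ[PS K n] N'')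

theorem Dm_exact (h : Function.Exact f q) (hq : Function.Surjective q) (i : ℕ) :
    Function.Exact (Dm f i) (Dm q i) := by
  induction i with
  | zero => exact h
  | succ i ih => exact lTensor_exact (PS K n) ih (Dm_surj q hq i)

theorem Cm_exact (h : Function.Exact f q) (hq : Function.Surjective q) (i : ℕ) :
    Function.Exact (Cm M f i) (Cm M q i) :=
  lTensor_exact M (Dm_exact f q h hq i) (Dm_surj q hq i)

theorem ker_step (h : Function.Exact f q) (hf : Function.Injective f) (hq : Function.Surjective q)
    (i : ℕ)
    (h1 : LinearMap.ker (barB K n N M i) ≤ LinearMap.range (barB K n N M (i + 1)))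
    (h2 : LinearMap.ker (barB K n N' M (i + 1)) ≤ LinearMap.range (barB K n N' M (i + 2))) :
    LinearMap.ker (barB K n N'' M (i + 1)) ≤ LinearMap.range (barB K n N'' M (i + 2)) := by
  intro z hz
  rw [LinearMap.mem_ker] at hz
  obtain ⟨x, rfl⟩ := Cm_surj q hq (i + 2) z
  rw [← Cm_barB] at hz
  obtain ⟨y, hy⟩ := (Cm_exact f q h hq (i + 1) _).1 hz
  have hy0 : barB K n N M i y = 0 := by
    apply Cm_inj f hf i
    rw [Cm_barB, hy, bb, map_zero]
  obtain ⟨w, rfl⟩ := h1 hy0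
  have : x - Cm M f (i + 2) w ∈ LinearMap.ker (barB K n N' M (i + 1)) := by
    rw [LinearMap.mem_ker, map_sub, ← Cm_barB, hy, sub_self]
  obtain ⟨v, hv⟩ := h2 this
  refine ⟨Cm M q (i + 3) v, ?_⟩
  rw [← Cm_barB, hv, map_sub, (Cm_exact f q h hq (i + 2)).apply_apply_eq_zero, sub_zero]

end funct

/-! contraction -/
section contr
variable {N}
variable (σ : N →ₗ[K] barD K n N 1)

/-- contracting homotopy -/
def hh : (i : ℕ) → (barD K n N i →ₗ[K] barD K n N (i + 1))
  | 0 => σ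
  | (i + 1) => LinearMap.lTensor (PS K n) (hh i)

theorem hh_tm (i : ℕ) (s : PS K n) (t) :
    hh σ (i + 1) (tm N i s t) = tm N (i + 1) s (hh σ i t) := rfl

theorem hh_lm (i : ℕ) (s : PS K n) (t) :
    hh σ (i + 1) (lm N i s t) = lm N (i + 1) s (hh σ (i + 1) t) := by
  refine tm_ind (P := fun t => hh σ (i + 1) (lm N i s t) = lm N (i + 1) s (hh σ (i + 1) t)) ?_ ?_ ?_ t
  · simp
  · intro a t
    rw [lm_tm, hh_tm, hh_tm, lm_tm]
  · intro x y hx hy; simp only [map_add, hx, hy]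

theorem hh_barC (hσ : ∀ (s : PS K n) (x : N), σ (s • x) = lm N 0 s (σ x))
    (hσ' : ∀ x, barC K n N 0 (σ x) = x) (i : ℕ) : ∀ t,
    barC K n N (i + 1) (hh σ (i + 1) t) - hh σ i (barC K n N i t) = (-1 : K) ^ (i + 1) • t := by
  induction i with
  | zero =>
    intro t
    refine tm_ind (P := fun t => barC K n N (0 + 1) (hh σ (0 + 1) t) - hh σ 0 (barC K n N 0 t) =
      (-1 : K) ^ (0 + 1) • t) ?_ ?_ ?_ t
    · simp
    · intro s x
      have e1 : barC K n N 0 (hh σ 0 x) = x := hσ' x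
      have e2 : hh σ 0 (barC K n N 0 (tm N 0 s x)) = lm N 0 s (hh σ 0 x) :=
        (congrArg (hh σ 0) (barC_zero N s x)).trans (hσ s x)
      rw [hh_tm, e2]
      refine (congrArg (fun y => y - _) (barC_succ N 0 s (hh σ 0 x))).trans ?_
      rw [e1]
      simp
    · intro x y hx hy
      simp only [map_add, smul_add, ← hx, ← hy]; abel
  | succ i ih =>
    intro t
    refine tm_ind (P := fun t => barC K n N (i + 1 + 1) (hh σ (i + 1 + 1) t) -
      hh σ (i + 1) (barC K n N (i + 1) t) = (-1 : K) ^ (i + 1 + 1) • t) ?_ ?_ ?_ t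
    · simp
    · intro s x
      have := ih x
      rw [hh_tm, barC_succ, barC_succ, map_sub, hh_lm, hh_tm, sub_sub_sub_cancel_left, ← map_sub,
        ← neg_sub, this, map_neg, map_smul, pow_succ _ (i + 1), mul_neg_one, neg_smul]
    · intro x y hx hy
      simp only [map_add, smul_add, ← hx, ← hy]; abel

theorem ker_le_of_section (hσ : ∀ (s : PS K n) (x : N), σ (s • x) = lm N 0 s (σ x))
    (hσ' : ∀ x, barC K n N 0 (σ x) = x) (i : ℕ) :
    LinearMap.ker (barB K n N M i) ≤ LinearMap.range (barB K n N M (i + 1)) := by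
  have key : ∀ z : M ⊗[K] barD K n N (i + 1),
      barB K n N M (i + 1) (LinearMap.lTensor M (hh σ (i + 1)) z) -
        LinearMap.lTensor M (hh σ i) (barB K n N M i z) = -((-1 : K) ^ (i + 1) • z) := by
    intro z
    induction z using TensorProduct.induction_on with
    | zero => simp
    | tmul m y =>
      have ham : ∀ y, LinearMap.lTensor M (hh σ i) (am N i m y) = am N (i + 1) m (hh σ (i + 1) y) := by
        intro y
        refine tm_ind (P := fun y => LinearMap.lTensor M (hh σ i) (am N i m y) =
          am N (i + 1) m (hh σ (i + 1) y)) ?_ ?_ ?_ y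
        · simp
        · intro s t; rw [am_tm, hh_tm, am_tm, LinearMap.lTensor_tmul]
        · intro x y hx hy; simp only [map_add, hx, hy]
      rw [LinearMap.lTensor_tmul, barB_tmul, barB_tmul, map_sub, ham, LinearMap.lTensor_tmul,
        sub_sub_sub_cancel_left, ← tmul_sub, ← neg_sub, hh_barC σ hσ hσ', tmul_neg, tmul_smul]
    | add x y hx hy =>
      simp only [map_add, smul_add, neg_add, ← hx, ← hy]; abel
  intro z hz
  rw [LinearMap.mem_ker] at hz
  have h := key z
  rw [hz, map_zero, sub_zero] at h
  refine ⟨(-(-1 : K) ^ (i + 1)) • (LinearMap.lTensor M (hh σ (i + 1)) z), ?_⟩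
  rw [map_smul, h, smul_neg, neg_smul, neg_neg, smul_smul, ← mul_pow]
  simp

theorem ker_le_of_projective [Module.Projective (PS K n) N] (i : ℕ) :
    LinearMap.ker (barB K n N M i) ≤ LinearMap.range (barB K n N M (i + 1)) := by
  let c : (PS K n) ⊗[K] N →ₗ[PS K n] N := TensorProduct.AlgebraTensorModule.lift
    { toFun := fun s => (LinearMap.toSpanSingleton (PS K n) (N →ₗ[K] N) LinearMap.id s)
      map_add' := by intros; ext; simp [add_smul]
      map_smul' := by intros; ext; simp [mul_smul] }
  have hc : ∀ s x, c (s ⊗ₜ x) = s • x := by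
    intro s x
    simp [c]
  have hs : Function.Surjective c := fun x => ⟨1 ⊗ₜ x, by rw [hc, one_smul]⟩
  obtain ⟨τ, hτ⟩ := Module.projective_lifting_property c LinearMap.id hs
  refine ker_le_of_section (N := N) (τ.restrictScalars K : N →ₗ[K] (PS K n) ⊗[K] N) ?_ ?_ i
  · intro s x
    have h1 : τ (s • x) = s • τ x := map_smul τ s x
    have h2 : ∀ y : (PS K n) ⊗[K] N, s • y = lm N 0 s y := by
      intro y
      refine tm_ind (i := 0) (N := N) (P := fun y : (PS K n) ⊗[K] N => s • y = lm N 0 s y) ?_ ?_ ?_ y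
      · exact (smul_zero s).trans (map_zero (lm N 0 s)).symm
      · intro a t
        rw [lm_tm]
        exact TensorProduct.smul_tmul' s a t
      · intro x y hx hy
        exact (smul_add s _ _).trans ((congrArg₂ (· + ·) hx hy).trans (map_add (lm N 0 s) _ _).symm)
    exact h1.trans (h2 _)
  · intro x
    have h2 : ∀ y : (PS K n) ⊗[K] N, barC K n N 0 y = c y := by
      intro y
      induction y using TensorProduct.induction_on with
      | zero => exact (map_zero (barC K n N 0)).trans (map_zero c).symm
      | tmul s x => exact (barC_zero N s x).trans (hc s x).symm
      | add x y hx hy =>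
        exact (map_add (barC K n N 0) _ _).trans ((congrArg₂ (· + ·) hx hy).trans (map_add c _ _).symm)
    exact (h2 _).trans (LinearMap.congr_fun hτ x)

end contr
end bar
end TG
end

noncomputable section
open MvPolynomial TensorProduct CategoryTheory
namespace TG
section van
variable {K : Type} [Field K] {n : ℕ}

/-- projectivity with respect to the first `k` variables -/
def KProj (k : ℕ) (W : Type) [AddCommGroup W] [Module K W] [Module (PS K n) W] : Prop :=
  ∀ (Z : Type) [AddCommGroup Z] [Module K Z] (e : Fin n → Z →ₗ[K] Z) (p : Z →ₗ[K] W),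
    (∀ i j, i.1 < k → j.1 < k → ∀ z, e i (e j z) = e j (e i z)) → Function.Surjective p →
    (∀ i, i.1 < k → ∀ z, p (e i z) = (X i : PS K n) • p z) →
    ∃ σ : W →ₗ[K] Z, (∀ w, p (σ w) = w) ∧
      ∀ i, i.1 < k → ∀ w, σ ((X i : PS K n) • w) = e i (σ w)

theorem KProj.zero (W : Type) [AddCommGroup W] [Module K W] [Module (PS K n) W] :
    KProj (K := K) (n := n) 0 W := by
  intro Z _ _ e p _ hp _
  obtain ⟨σ, hσ⟩ := p.exists_rightInverse_of_surjective (LinearMap.range_eq_top.2 hp)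
  exact ⟨σ, fun w => LinearMap.congr_fun hσ w, fun i hi => absurd hi (Nat.not_lt_zero _)⟩

variable {M : Type} [AddCommGroup M] [Module K M] [Module (PS K n) M]
  [IsScalarTower K (PS K n) M]

theorem KProj.ker_le {W : Type} [AddCommGroup W] [Module K W] [Module (PS K n) W]
    [IsScalarTower K (PS K n) W] (h : KProj (K := K) (n := n) n W) (i : ℕ) :
    LinearMap.ker (barB K n W M i) ≤ LinearMap.range (barB K n W M (i + 1)) := by
  let c0 : barD K n W 1 →ₗ[K] W := barC K n W 0
  have hC : ∀ (s : PS K n) z, c0 (lm W 0 s z) = s • c0 z := by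
    intro s z
    exact (cc W 0 s z).symm.trans (barC_zero W s _)
  obtain ⟨σ, h1, h2⟩ := h (barD K n W 1) (fun i => lm W 0 (X i)) c0
    (fun i j _ _ z => by rw [lm_lm, lm_lm, mul_comm])
    (fun w => ⟨tm W 0 1 w, (barC_zero W 1 w).trans (one_smul (PS K n) w)⟩)
    (fun i _ z => hC _ z)
  refine ker_le_of_section σ ?_ h1 i
  intro s
  induction s using MvPolynomial.induction_on with
  | C a =>
    intro x
    have e1 : (C a : PS K n) • x = a • x := by
      rw [← MvPolynomial.algebraMap_eq, algebraMap_smul]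
    have e2 : ∀ y, lm W 0 (C a : PS K n) y = a • y := by
      intro y
      refine tm_ind (P := fun y => lm W 0 (C a : PS K n) y = a • y) ?_ ?_ ?_ y
      · simp
      · intro s t; rw [lm_tm, ← MvPolynomial.smul_eq_C_mul, map_smul]; rfl
      · intro x y hx hy; simp only [map_add, hx, hy, smul_add]
    rw [e1, e2, map_smul]
  | add p q hp hq =>
    intro x
    have e2 : ∀ y, lm W 0 (p + q) y = lm W 0 p y + lm W 0 q y := by
      intro y
      refine tm_ind (P := fun y => lm W 0 (p + q) y = lm W 0 p y + lm W 0 q y) ?_ ?_ ?_ y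
      · simp
      · intro s t; simp only [lm_tm, add_mul, map_add, LinearMap.add_apply]
      · intro x y hx hy; simp only [map_add, hx, hy]; abel
    rw [add_smul, map_add, hp, hq, e2]
  | mul_X p i hp =>
    intro x
    rw [mul_smul, hp, h2 i i.2, lm_lm]

/-- the substitution `x_k ↦ t` -/
def theta (k : Fin n) : PS K n →ₐ[K] Polynomial (PS K n) :=
  aeval (fun i => if i = k then Polynomial.X else Polynomial.C (X i))

variable (K) in
/-- `W[t]` with `x_k` acting as `t` -/
def PW (_k : Fin n) (W : Type) [AddCommGroup W] [Module (PS K n) W] : Type :=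
  PolynomialModule (PS K n) W

variable (k : Fin n) (W : Type) [AddCommGroup W] [Module (PS K n) W] [Module K W]
    [IsScalarTower K (PS K n) W]

instance : AddCommGroup (PW K k W) := inferInstanceAs (AddCommGroup (PolynomialModule (PS K n) W))
instance : Module K (PW K k W) := inferInstanceAs (Module K (PolynomialModule (PS K n) W))
instance : Module (Polynomial (PS K n)) (PW K k W) :=
  inferInstanceAs (Module (Polynomial (PS K n)) (PolynomialModule (PS K n) W))
instance : IsScalarTower K (Polynomial (PS K n)) (PW K k W) :=
  inferInstanceAs (IsScalarTower K (Polynomial (PS K n)) (PolynomialModule (PS K n) W))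
instance : Module (PS K n) (PW K k W) := Module.compHom (PW K k W) (theta (K := K) k).toRingHom

theorem PW_smul (s : PS K n) (x : PW K k W) : s • x = (theta k s) • x := rfl

instance : IsScalarTower K (PS K n) (PW K k W) := ⟨fun c s x => by
  rw [PW_smul, PW_smul, map_smul, smul_assoc]⟩

/-- single -/
def sg (j : ℕ) : W →ₗ[K] PW K k W :=
  ((PolynomialModule.coeffLinearEquiv (PS K n) K (M := W)).symm.toLinearMap).comp (Finsupp.lsingle j)

theorem sg_eq (j : ℕ) (w : W) : sg (K := K) k W j w = PolynomialModule.single (PS K n) j w := rfl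

variable {W} in
theorem PW_ind {P : PW K k W → Prop} (h0 : P 0) (h : ∀ j w, P (sg (K := K) k W j w))
    (ha : ∀ x y, P x → P y → P (x + y)) (x : PW K k W) : P x := by
  exact PolynomialModule.induction_linear (p := P) x h0 ha h

theorem mon_sg (i : ℕ) (r : PS K n) (j : ℕ) (w : W) :
    (Polynomial.monomial i r) • sg (K := K) k W j w = sg (K := K) k W (i + j) (r • w) :=
  PolynomialModule.monomial_smul_single i r j w

theorem X_sg_ne (i : Fin n) (hi : i ≠ k) (j : ℕ) (w : W) :
    (X i : PS K n) • sg (K := K) k W j w = sg (K := K) k W j ((X i : PS K n) • w) := by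
  rw [PW_smul, theta, aeval_X, if_neg hi, ← Polynomial.monomial_zero_left, mon_sg, zero_add]

theorem X_sg (j : ℕ) (w : W) :
    (X k : PS K n) • sg (K := K) k W j w = sg (K := K) k W (j + 1) w := by
  rw [PW_smul, theta, aeval_X, if_pos rfl, ← Polynomial.monomial_one_one_eq_X, mon_sg, one_smul,
    add_comm]

variable {k W} in
theorem KProj.PW_succ (h : KProj (K := K) (n := n) k.1 W) :
    KProj (K := K) (n := n) (k.1 + 1) (PW K k W) := by
  intro Z _ _ e p hc hp he
  let Z' : Submodule K Z := (LinearMap.range (sg (K := K) k W 0)).comap p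
  have hst : ∀ i : Fin n, i.1 < k.1 → ∀ z ∈ Z', e i z ∈ Z' := by
    rintro i hi z ⟨w, hw⟩
    refine ⟨(X i : PS K n) • w, ?_⟩
    rw [he i (by omega), ← hw, X_sg_ne]
    rintro rfl; omega
  let e' : Fin n → Z' →ₗ[K] Z' := fun i =>
    if hi : i.1 < k.1 then (e i).restrict (hst i hi) else 0
  have he' : ∀ i : Fin n, i.1 < k.1 → ∀ z, (e' i z : Z) = e i z := by
    intro i hi z
    have : e' i = (e i).restrict (hst i hi) := dif_pos hi
    rw [this]; rfl
  let c0 : PW K k W →ₗ[K] W :=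
    (Finsupp.lapply 0).comp (PolynomialModule.coeffLinearEquiv (PS K n) K (M := W)).toLinearMap
  have hc0 : ∀ w, c0 (sg (K := K) k W 0 w) = w := fun w => Finsupp.single_eq_same
  have hp0 : ∀ z : Z', sg (K := K) k W 0 (c0 (p z)) = p z := by
    rintro ⟨z, w, hw⟩
    simp only [← hw, hc0]
  obtain ⟨σ, h1, h2⟩ := h Z' e' ((c0.comp p).comp Z'.subtype)
    (by intro i j hi hj z
        apply Subtype.ext
        rw [he' i hi, he' j hj, he' j hj, he' i hi, hc i j (by omega) (by omega)])
    (by intro w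
        obtain ⟨z, hz⟩ := hp (sg (K := K) k W 0 w)
        exact ⟨⟨z, w, hz.symm⟩, by simp [hz, hc0]⟩)
    (by intro i hi z
        simp only [LinearMap.comp_apply, Submodule.subtype_apply, he' i hi]
        rw [he i (by omega), ← hp0, X_sg_ne, hc0, hc0]
        rintro rfl; omega)
  let τ : PW K k W →ₗ[K] Z := (Finsupp.lsum K (fun j => ((e k) ^ j).comp (Z'.subtype.comp σ))).comp
    (PolynomialModule.coeffLinearEquiv (PS K n) K (M := W)).toLinearMap
  have hτ : ∀ j w, τ (sg (K := K) k W j w) = ((e k) ^ j) (σ w) := by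
    intro j w
    change (Finsupp.lsum K (fun j => ((e k) ^ j).comp (Z'.subtype.comp σ))) (Finsupp.single j w) = _
    rw [Finsupp.lsum_single]; rfl
  have hpp : ∀ j z, p (((e k) ^ j) z) = (X k ^ j : PS K n) • p z := by
    intro j
    induction j with
    | zero => intro z; simp
    | succ j ih => intro z; rw [pow_succ, Module.End.mul_apply, ih, he k (by omega), pow_succ, mul_smul]
  have hXj : ∀ j w, (X k ^ j : PS K n) • sg (K := K) k W 0 w = sg (K := K) k W j w := by
    intro j w
    induction j with
    | zero => simp
    | succ j ih => rw [pow_succ', mul_smul, ih, X_sg]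
  have hcc : ∀ i : Fin n, i.1 < k.1 → ∀ j z, ((e k) ^ j) (e i z) = e i (((e k) ^ j) z) := by
    intro i hi j
    induction j with
    | zero => intro z; simp
    | succ j ih =>
      intro z
      rw [pow_succ, Module.End.mul_apply, Module.End.mul_apply, hc k i (by omega) (by omega), ih]
  refine ⟨τ, ?_, ?_⟩
  · intro x
    refine PW_ind k (P := fun x => p (τ x) = x) ?_ ?_ ?_ x
    · simp
    · intro j w
      rw [hτ, hpp, ← hp0]
      have := h1 w
      simp only [LinearMap.comp_apply, Submodule.subtype_apply] at this
      rw [this, hXj]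
    · intro x y hx hy; simp only [map_add, hx, hy]
  · intro i hi x
    refine PW_ind k (P := fun x => τ ((X i : PS K n) • x) = e i (τ x)) ?_ ?_ ?_ x
    · simp
    · intro j w
      by_cases hik : i = k
      · subst hik
        rw [X_sg, hτ, hτ, pow_succ', Module.End.mul_apply]
      · have hi' : i.1 < k.1 := by
          have : i.1 ≠ k.1 := fun h => hik (Fin.ext h)
          omega
        rw [X_sg_ne _ _ _ hik, hτ, hτ, h2 i hi', he' i hi', hcc i hi']
    · intro x y hx hy; simp only [map_add, smul_add, hx, hy]

/-- multiplication by `t - x_k` -/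
def pf : PW K k W →ₗ[PS K n] PW K k W where
  toFun x := (Polynomial.X - Polynomial.C (X k : PS K n)) • x
  map_add' := smul_add _
  map_smul' s x := by
    simp only [PW_smul, RingHom.id_apply]
    rw [smul_smul, smul_smul, mul_comm]

/-- evaluation -/
def pq : PW K k W →ₗ[PS K n] W where
  toFun x := PolynomialModule.eval (X k : PS K n) (x : PolynomialModule (PS K n) W)
  map_add' := map_add (PolynomialModule.eval (M := W) (X k : PS K n))
  map_smul' s x := by
    refine (PolynomialModule.eval_smul (M := W) (theta k s) x (X k)).trans ?_
    have : (theta k s).eval (X k : PS K n) = s := by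
      induction s using MvPolynomial.induction_on with
      | C a => simp [theta]
      | add p q hp hq => rw [map_add, Polynomial.eval_add, hp, hq]
      | mul_X p i hp =>
        rw [map_mul, Polynomial.eval_mul, hp, theta, aeval_X]
        by_cases h : i = k
        · subst h; simp
        · simp [h]
    rw [this]; rfl

theorem pq_sg (j : ℕ) (w : W) : pq k W (sg (K := K) k W j w) = (X k ^ j : PS K n) • w :=
  PolynomialModule.eval_single _ _ _

theorem pq_surj : Function.Surjective (pq (K := K) k W) := fun w =>
  ⟨sg (K := K) k W 0 w, by rw [pq_sg, pow_zero, one_smul]⟩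

theorem pf_sg (j : ℕ) (w : W) : pf k W (sg (K := K) k W j w) =
    sg (K := K) k W (j + 1) w - sg (K := K) k W j ((X k : PS K n) • w) := by
  change (Polynomial.X - Polynomial.C (X k : PS K n)) • sg (K := K) k W j w = _
  rw [sub_smul, ← Polynomial.monomial_one_one_eq_X, mon_sg, ← Polynomial.monomial_zero_left, mon_sg,
    one_smul, add_comm, zero_add]

theorem pf_exact : Function.Exact (pf (K := K) k W) (pq (K := K) k W) := by
  have h1 : ∀ x, pq k W (pf (K := K) k W x) = 0 := by
    intro x
    refine PW_ind k (P := fun x => pq k W (pf (K := K) k W x) = 0) ?_ ?_ ?_ x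
    · simp
    · intro j w
      rw [pf_sg, map_sub, pq_sg, pq_sg, smul_smul, pow_succ, sub_self]
    · intro x y hx hy; simp only [map_add, hx, hy, add_zero]
  have h2 : ∀ j (w : W), ∃ y, pf (K := K) k W y = sg (K := K) k W j w -
      sg (K := K) k W 0 ((X k ^ j : PS K n) • w) := by
    intro j
    induction j with
    | zero => intro w; exact ⟨0, by simp⟩
    | succ j ih =>
      intro w
      obtain ⟨y, hy⟩ := ih ((X k : PS K n) • w)
      refine ⟨sg (K := K) k W j w + y, ?_⟩
      rw [map_add, hy, pf_sg, smul_smul, pow_succ]; abel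
  have h3 : ∀ x : PW K k W, ∃ y, pf (K := K) k W y = x - sg (K := K) k W 0 (pq (K := K) k W x) := by
    intro x
    refine PW_ind k (P := fun x => ∃ y, pf (K := K) k W y = x - sg (K := K) k W 0 (pq (K := K) k W x))
      ?_ ?_ ?_ x
    · exact ⟨0, by simp⟩
    · intro j w; rw [pq_sg]; exact h2 j w
    · rintro x y ⟨a, ha⟩ ⟨b, hb⟩
      exact ⟨a + b, by rw [map_add, ha, hb, map_add, map_add]; abel⟩
  intro x
  constructor
  · intro hx
    obtain ⟨y, hy⟩ := h3 x
    exact ⟨y, by rw [hy, hx, map_zero, sub_zero]⟩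
  · rintro ⟨y, rfl⟩; exact h1 y

theorem pf_inj : Function.Injective (pf (K := K) k W) := by
  rw [← LinearMap.ker_eq_bot, LinearMap.ker_eq_bot']
  intro x hx
  let cf : ℕ → PW K k W →ₗ[K] W := fun j => (Finsupp.lapply j).comp
    (PolynomialModule.coeffLinearEquiv (PS K n) K (M := W)).toLinearMap
  have hcf : ∀ j i w, cf j (sg (K := K) k W i w) = if i = j then w else 0 := by
    intro j i w
    exact Finsupp.single_apply
  have h1 : ∀ j (x : PW K k W), cf (j + 1) (pf (K := K) k W x) =
      cf j x - (X k : PS K n) • cf (j + 1) x := by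
    intro j x
    refine PW_ind k (P := fun x => cf (j + 1) (pf (K := K) k W x) =
      cf j x - (X k : PS K n) • cf (j + 1) x) ?_ ?_ ?_ x
    · simp
    · intro i w
      rw [pf_sg, map_sub, hcf, hcf, hcf, hcf]
      simp
    · intro x y hx hy; simp only [map_add, smul_add, hx, hy]; abel
  have h2 : ∀ j, cf j x = (X k : PS K n) • cf (j + 1) x := by
    intro j
    have := h1 j x
    rw [hx, map_zero] at this
    exact (sub_eq_zero.1 this.symm)
  have h3 : ∀ m j, cf j x = (X k ^ m : PS K n) • cf (j + m) x := by
    intro m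
    induction m with
    | zero => intro j; simp
    | succ m ih => intro j; rw [ih, h2, smul_smul, pow_succ, add_assoc]
  have h4 : ∃ m, ∀ j, m ≤ j → cf j x = 0 := by
    let y : ℕ →₀ W := (PolynomialModule.coeffLinearEquiv (PS K n) K (M := W)) x
    refine ⟨y.support.sup id + 1, fun j hj => ?_⟩
    change y j = 0
    by_contra h
    have := Finset.le_sup (f := id) (Finsupp.mem_support_iff.2 h)
    simp only [id] at this
    omega
  obtain ⟨m, hm⟩ := h4
  apply (PolynomialModule.coeffLinearEquiv (PS K n) K (M := W)).injective
  refine Finsupp.ext fun j => ?_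
  change cf j x = 0
  rw [h3 m j, hm _ (by omega), smul_zero]

theorem ker_le_aux (d : ℕ) : ∀ (k : ℕ), k + d = n → ∀ (W : Type) [AddCommGroup W]
    [Module (PS K n) W] [Module K W] [IsScalarTower K (PS K n) W], KProj (K := K) (n := n) k W →
    ∀ i, d ≤ i → LinearMap.ker (barB K n W M i) ≤ LinearMap.range (barB K n W M (i + 1)) := by
  induction d with
  | zero =>
    intro k hk W _ _ _ _ h i _
    have hk' : k = n := by omega
    rw [hk'] at h
    exact h.ker_le i
  | succ d ih =>
    intro k hk W _ _ _ _ h i hi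
    obtain ⟨i, rfl⟩ : ∃ i', i = i' + 1 := ⟨i - 1, by omega⟩
    have hkn : k < n := by omega
    have h' := KProj.PW_succ (k := ⟨k, hkn⟩) h
    exact ker_step _ _ (pf_exact ⟨k, hkn⟩ W) (pf_inj _ W) (pq_surj _ W) i
      (ih (k + 1) (by omega) _ h' i (by omega)) (ih (k + 1) (by omega) _ h' (i + 1) (by omega))

theorem ker_le_of_ge {W : Type} [AddCommGroup W]
    [Module (PS K n) W] [Module K W] [IsScalarTower K (PS K n) W] (i : ℕ) (hi : n ≤ i) :
    LinearMap.ker (barB K n W M i) ≤ LinearMap.range (barB K n W M (i + 1)) :=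
  ker_le_aux n 0 (by omega) W (KProj.zero W) i hi

end van
end TG
end

noncomputable section
open MvPolynomial TensorProduct CategoryTheory
namespace TG
section gr
variable {K : Type} [Field K]

theorem IsGr.of_decomp {A : Type} [AddCommGroup A] [Module K A] (G : ℤ → Submodule K A)
    [DirectSum.Decomposition G] : IsGr G := by
  refine IsGr.of_proj (DirectSum.Decomposition.isInternal G).submodule_iSup_eq_top
    (fun d => (G d).subtype.comp ((DirectSum.component K ℤ (fun i => G i) d).comp
      (DirectSum.decomposeLinearEquiv G).toLinearMap)) ?_
  intro d e x hx
  change (((DirectSum.decompose G) x) d : A) = _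
  split_ifs with h
  · subst h; exact DirectSum.decompose_of_mem_same G hx
  · exact DirectSum.decompose_of_mem_ne G hx h

theorem IsGr.map_surj {A B : Type} [AddCommGroup A] [Module K A] [AddCommGroup B] [Module K B]
    {G : ℤ → Submodule K A} (hG : ⨆ d, G d = ⊤)
    (π : ℤ → A →ₗ[K] A) (hπ : ∀ d e, ∀ x ∈ G e, π d x = if e = d then x else 0)
    (f : A →ₗ[K] B) (hf : Function.Surjective f) (hk : ∀ d x, f x = 0 → f (π d x) = 0) :
    IsGr (fun d => (G d).map f) := by
  obtain ⟨σ, hσ⟩ := f.exists_rightInverse_of_surjective (LinearMap.range_eq_top.2 hf)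
  refine IsGr.of_proj ?_ (fun d => f.comp ((π d).comp σ)) ?_
  · rw [← Submodule.map_iSup, hG, Submodule.map_top, LinearMap.range_eq_top.2 hf]
  · rintro d e _ ⟨a, ha, rfl⟩
    have h1 : f (σ (f a) - a) = 0 := by
      rw [map_sub, sub_eq_zero]; exact LinearMap.congr_fun hσ (f a)
    have h2 := hk d _ h1
    rw [map_sub, map_sub, sub_eq_zero] at h2
    change f (π d (σ (f a))) = _
    rw [h2, hπ d e a ha]
    split_ifs <;> simp

theorem IsGr.comap_ker {A A' B : Type} [AddCommGroup A] [Module K A] [AddCommGroup B] [Module K B]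
    [AddCommGroup A'] [Module K A']
    {GA : ℤ → Submodule K A} {GB : ℤ → Submodule K B} (hA : IsGr GA) (hB : IsGr GB)
    (f : A →ₗ[K] B) (hf : ∀ d, ∀ x ∈ GA d, f x ∈ GB d) (ι : A' →ₗ[K] A)
    (hι : Function.Injective ι) (hex : Function.Exact ι f) :
    IsGr (fun d => (GA d).comap ι) := by
  obtain ⟨π, h1, h2, h3⟩ := hA.exists_proj
  obtain ⟨π', h1', h2', -⟩ := hB.exists_proj
  have hc : ∀ d a, f (π d a) = π' d (f a) := by
    intro d a
    refine ind hA.1 (P := fun a => f (π d a) = π' d (f a)) ?_ ?_ ?_ a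
    · intro e x hx
      rw [h1 d e x hx, h1' d e _ (hf e x hx)]
      split_ifs <;> simp
    · simp
    · intro x y hx hy; simp only [map_add, hx, hy]
  have hex2 : ∀ d x, ∃ y, ι y = π d (ι x) := fun d x =>
    (hex _).1 (by rw [hc, hex.apply_apply_eq_zero, map_zero])
  choose ρ hρ using hex2
  let R : ℤ → A' →ₗ[K] A' := fun d =>
    { toFun := ρ d
      map_add' := fun x y => hι (by simp only [hρ, map_add])
      map_smul' := fun c x => hι (by simp only [hρ, map_smul, RingHom.id_apply]) }
  have hR : ∀ d x, ι (R d x) = π d (ι x) := hρ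
  refine IsGr.of_proj ?_ R ?_
  · rw [eq_top_iff]
    rintro x -
    obtain ⟨s, hs⟩ := h3 (ι x)
    have : x = ∑ d ∈ s, R d x := hι (by rw [map_sum]; simp only [hR, hs])
    rw [this]
    refine Submodule.sum_mem _ fun d _ => Submodule.mem_iSup_of_mem d ?_
    rw [Submodule.mem_comap, hR]
    exact h2 _ _
  · intro d e x hx
    apply hι
    rw [hR, h1 d e _ hx]
    split_ifs <;> simp

variable {n : ℕ}

theorem mem_polyGrade_nat (d : ℕ) (x : PS K n) :
    x ∈ polyGrade K n (d : ℤ) ↔ x ∈ homogeneousSubmodule (Fin n) K d := by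
  rw [polyGrade, if_pos (by omega), Int.toNat_natCast]

theorem polyGrade_neg {d : ℤ} (h : d < 0) : polyGrade K n d = ⊥ := if_neg (by omega)

theorem polyGrade_top : ⨆ d, polyGrade K n d = ⊤ := by
  rw [eq_top_iff]
  rintro x -
  rw [← sum_homogeneousComponent x]
  exact Submodule.sum_mem _ fun d _ => Submodule.mem_iSup_of_mem (d : ℤ)
    ((mem_polyGrade_nat _ _).2 (homogeneousComponent_mem _ _))

/-- projections on the polynomial ring -/
def pp (d : ℤ) : PS K n →ₗ[K] PS K n := if 0 ≤ d then homogeneousComponent d.toNat else 0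

theorem pp_spec (d e : ℤ) (x : PS K n) (hx : x ∈ polyGrade K n e) :
    pp d x = if e = d then x else 0 := by
  rcases lt_or_ge e 0 with he | he
  · rw [polyGrade_neg he, Submodule.mem_bot] at hx
    subst hx; simp
  · obtain ⟨e, rfl⟩ := Int.eq_ofNat_of_zero_le he
    rw [mem_polyGrade_nat] at hx
    rcases lt_or_ge d 0 with hd | hd
    · rw [pp, if_neg (by omega), if_neg (by omega)]; rfl
    · obtain ⟨d, rfl⟩ := Int.eq_ofNat_of_zero_le hd
      rw [pp, if_pos (by omega), Int.toNat_natCast, homogeneousComponent_of_mem hx]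
      by_cases h : d = e
      · simp [h]
      · rw [if_neg h, if_neg (by omega)]

theorem polyGrade_isGr : IsGr (polyGrade K n) := IsGr.of_proj polyGrade_top pp pp_spec

theorem polyGrade_isLF : IsLF (polyGrade K n) := by
  refine ⟨fun d => ?_, 0, fun d hd => polyGrade_neg hd⟩
  rcases lt_or_ge d 0 with hd | hd
  · rw [polyGrade_neg hd]; infer_instance
  · rw [polyGrade, if_pos hd]
    exact Module.Finite.iff_fg.2 (homogeneousSubmodule_fg _ _ _)

theorem polyGrade_mul {p q : ℤ} {x y : PS K n} (hx : x ∈ polyGrade K n p)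
    (hy : y ∈ polyGrade K n q) : x * y ∈ polyGrade K n (p + q) := by
  rcases lt_or_ge p 0 with hp | hp
  · rw [polyGrade_neg hp, Submodule.mem_bot] at hx; subst hx; simp
  rcases lt_or_ge q 0 with hq | hq
  · rw [polyGrade_neg hq, Submodule.mem_bot] at hy; subst hy; simp
  obtain ⟨p, rfl⟩ := Int.eq_ofNat_of_zero_le hp
  obtain ⟨q, rfl⟩ := Int.eq_ofNat_of_zero_le hq
  rw [mem_polyGrade_nat] at hx hy
  rw [← Nat.cast_add, mem_polyGrade_nat]
  exact IsHomogeneous.mul hx hy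

theorem one_mem_polyGrade : (1 : PS K n) ∈ polyGrade K n 0 :=
  (mem_polyGrade_nat 0 _).2 (isHomogeneous_one _ _)

theorem X_mem_polyGrade (i : Fin n) : (X i : PS K n) ∈ polyGrade K n 1 :=
  (mem_polyGrade_nat 1 _).2 (isHomogeneous_X _ _)

/-- graded module -/
structure GrMod (N : Type) [AddCommGroup N] [Module K N] [Module (PS K n) N]
    (GN : ℤ → Submodule K N) : Prop where
  gr : IsGr GN
  smul : ∀ p q, ∀ s ∈ polyGrade K n p, ∀ x ∈ GN q, s • x ∈ GN (p + q)

theorem GrMod.gens {N : Type} [AddCommGroup N] [Module K N] [Module (PS K n) N]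
    {GN : ℤ → Submodule K N} (h : GrMod (n := n) N GN) [hf : Module.Finite (PS K n) N] :
    ∃ (r : ℕ) (β : Fin r → ℤ) (ν : Fin r → N), (∀ b, ν b ∈ GN (β b)) ∧
      Submodule.span (PS K n) (Set.range ν) = ⊤ := by
  classical
  obtain ⟨s, hs⟩ := hf.fg_top
  obtain ⟨π, -, h2, h3⟩ := h.gr.exists_proj
  choose T hT using h3
  let U : Finset (ℤ × N) := s.biUnion (fun x => (T x).image (fun d => (d, π d x)))
  refine ⟨U.card, fun b => (U.equivFin.symm b).1.1, fun b => (U.equivFin.symm b).1.2, ?_, ?_⟩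
  · intro b
    have hU : ∀ u ∈ U, u.2 ∈ GN u.1 := by
      intro u hu
      simp only [U, Finset.mem_biUnion, Finset.mem_image] at hu
      obtain ⟨x, -, d, -, rfl⟩ := hu
      exact h2 _ _
    exact hU _ (U.equivFin.symm b).2
  · rw [eq_top_iff, ← hs, Submodule.span_le]
    intro x hx
    rw [SetLike.mem_coe, ← hT x]
    refine Submodule.sum_mem _ fun d hd => Submodule.subset_span ?_
    have : (d, π d x) ∈ U := Finset.mem_biUnion.2 ⟨x, hx, Finset.mem_image.2 ⟨d, hd, rfl⟩⟩
    exact ⟨U.equivFin ⟨_, this⟩, by simp⟩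

/-- shifted grading on the free module -/
def FrG {r : ℕ} (β : Fin r → ℤ) (d : ℤ) : Submodule K (Fin r → PS K n) :=
  Submodule.pi Set.univ (fun b => polyGrade K n (d - β b))

theorem mem_FrG {r : ℕ} (β : Fin r → ℤ) (d : ℤ) (v : Fin r → PS K n) :
    v ∈ FrG β d ↔ ∀ b, v b ∈ polyGrade K n (d - β b) := by
  simp [FrG, Submodule.mem_pi]

theorem FrG_grMod {r : ℕ} (β : Fin r → ℤ) : GrMod (n := n) (Fin r → PS K n) (FrG (K := K) β) := by
  classical
  constructor
  · refine IsGr.of_proj ?_ (fun d => LinearMap.pi fun b => (pp (d - β b)).comp (LinearMap.proj b)) ?_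
    · rw [eq_top_iff]
      rintro v -
      rw [← Finset.univ_sum_single v]
      refine Submodule.sum_mem _ fun b _ => ?_
      refine ind polyGrade_top (P := fun x : PS K n =>
        (Pi.single b x : Fin r → PS K n) ∈ ⨆ d, FrG (K := K) β d) ?_ ?_ ?_ (v b)
      · intro d x hx
        refine Submodule.mem_iSup_of_mem (d + β b) ((mem_FrG _ _ _).2 fun c => ?_)
        by_cases h : c = b
        · subst h; simpa using hx
        · simp [Pi.single_eq_of_ne h]
      · simp
      · intro x y hx hy
        rw [Pi.single_add]; exact Submodule.add_mem _ hx hy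
    · intro d e v hv
      rw [mem_FrG] at hv
      ext1 b
      change pp (d - β b) (v b) = _
      rw [pp_spec _ _ _ (hv b)]
      by_cases h : e = d
      · simp [h]
      · rw [if_neg h, if_neg (by omega)]; rfl
  · intro p q s hs v hv
    rw [mem_FrG] at hv ⊢
    intro b
    rw [Pi.smul_apply, smul_eq_mul, add_sub_assoc]
    exact polyGrade_mul hs (hv b)

theorem FrG_isLF {r : ℕ} (β : Fin r → ℤ) : IsLF (FrG (K := K) (n := n) β) := by
  classical
  refine ⟨fun d => ?_, ?_⟩
  · have : ∀ e, FiniteDimensional K (polyGrade K n e) := polyGrade_isLF.1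
    let f : FrG (K := K) (n := n) β d →ₗ[K] (∀ b, polyGrade K n (d - β b)) :=
      LinearMap.pi fun b => ((LinearMap.proj b).comp (FrG β d).subtype).codRestrict _
        (fun v => (mem_FrG _ _ _).1 v.2 b)
    refine FiniteDimensional.of_injective f ?_
    intro v w h
    ext1; ext1 b
    exact congrArg Subtype.val (congrFun h b)
  · obtain ⟨d0, hd0⟩ : ∃ d0 : ℤ, ∀ b, d0 ≤ β b := by
      rcases r with _ | r
      · exact ⟨0, fun b => b.elim0⟩
      · exact ⟨Finset.univ.inf' Finset.univ_nonempty β, fun b => Finset.inf'_le _ (Finset.mem_univ b)⟩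
    refine ⟨d0, fun d hd => ?_⟩
    rw [eq_bot_iff]
    intro v hv
    rw [mem_FrG] at hv
    rw [Submodule.mem_bot]
    ext1 b
    have := hv b
    rw [polyGrade_neg (by have := hd0 b; omega)] at this
    exact this

/-- the free cover -/
def cov {N : Type} [AddCommGroup N] [Module (PS K n) N] {r : ℕ} (ν : Fin r → N) :
    (Fin r → PS K n) →ₗ[PS K n] N := Fintype.linearCombination (PS K n) ν

theorem cov_apply {N : Type} [AddCommGroup N] [Module (PS K n) N] {r : ℕ} (ν : Fin r → N) (v) :
    cov (K := K) (n := n) ν v = ∑ b, v b • ν b := rfl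

theorem cov_surj {N : Type} [AddCommGroup N] [Module (PS K n) N] {r : ℕ} (ν : Fin r → N)
    (h : Submodule.span (PS K n) (Set.range ν) = ⊤) :
    Function.Surjective (cov (K := K) (n := n) ν) := by
  rw [← LinearMap.range_eq_top, cov, Fintype.range_linearCombination, h]

theorem cov_gr {N : Type} [AddCommGroup N] [Module K N] [Module (PS K n) N]
    {GN : ℤ → Submodule K N} (h : GrMod (n := n) N GN) {r : ℕ} {β : Fin r → ℤ} {ν : Fin r → N}
    (hν : ∀ b, ν b ∈ GN (β b)) (d : ℤ) (v) (hv : v ∈ FrG (K := K) (n := n) β d) :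
    cov (K := K) (n := n) ν v ∈ GN d := by
  rw [cov_apply]
  refine Submodule.sum_mem _ fun b _ => ?_
  have := h.smul _ _ _ ((mem_FrG _ _ _).1 hv b) _ (hν b)
  rwa [sub_add_cancel] at this

theorem GrMod.isLF {N : Type} [AddCommGroup N] [Module K N] [Module (PS K n) N]
    [IsScalarTower K (PS K n) N]
    {GN : ℤ → Submodule K N} (h : GrMod (n := n) N GN) [hf : Module.Finite (PS K n) N] :
    IsLF GN := by
  obtain ⟨r, β, ν, hν, hs⟩ := h.gens
  have key : ∀ d, (FrG β d).map ((cov (K := K) (n := n) ν).restrictScalars K) = GN d := fun d =>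
    (FrG_grMod β).gr.strict_surj h.gr ((cov (K := K) (n := n) ν).restrictScalars K)
      (fun d v hv => cov_gr h hν d v hv) (cov_surj ν hs) d
  obtain ⟨h1, d0, h2⟩ := FrG_isLF (K := K) (n := n) β
  refine ⟨fun d => ?_, d0, fun d hd => ?_⟩
  · rw [← key d]
    have := h1 d
    infer_instance
  · rw [← key d, h2 d hd, Submodule.map_bot]

/-- kernel of a graded map of graded modules -/
theorem GrMod.ker {N F : Type} [AddCommGroup N] [Module K N] [Module (PS K n) N]
    [IsScalarTower K (PS K n) N] [AddCommGroup F] [Module K F] [Module (PS K n) F]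
    [IsScalarTower K (PS K n) F]
    {GN : ℤ → Submodule K N} {GF : ℤ → Submodule K F} (h : GrMod (n := n) N GN)
    (hF : GrMod (n := n) F GF) (q : F →ₗ[PS K n] N) (hq : ∀ d, ∀ x ∈ GF d, q x ∈ GN d) :
    GrMod (n := n) (LinearMap.ker q)
      (fun d => (GF d).comap ((LinearMap.ker q).subtype.restrictScalars K)) := by
  constructor
  · exact hF.gr.comap_ker h.gr (q.restrictScalars K) hq ((LinearMap.ker q).subtype.restrictScalars K)
      Subtype.val_injective (LinearMap.exact_subtype_ker_map q)
  · intro a b s hs x hx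
    exact hF.smul a b s hs _ hx

theorem quotGrade_grMod (J : Ideal (PS K n)) (hJ : IsHomog K n J) :
    GrMod (n := n) (PS K n ⧸ J) (quotGrade K n J) := by
  constructor
  · refine IsGr.map_surj polyGrade_top pp pp_spec (Ideal.Quotient.mkₐ K J).toLinearMap
      (Ideal.Quotient.mkₐ_surjective K J) ?_
    intro d x hx
    have hx' : x ∈ J := Ideal.Quotient.eq_zero_iff_mem.1 hx
    refine Ideal.Quotient.eq_zero_iff_mem.2 ?_
    rw [pp]
    split_ifs
    · exact hJ x hx' _
    · exact J.zero_mem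
  · rintro p q s hs _ ⟨x, hx, rfl⟩
    exact ⟨s * x, polyGrade_mul hs hx, rfl⟩

end gr
end TG
end

noncomputable section
open MvPolynomial TensorProduct CategoryTheory
namespace TG
section bargr
variable {K : Type} [Field K] {n : ℕ}

theorem finrank_map_inj {A B : Type} [AddCommGroup A] [Module K A] [AddCommGroup B] [Module K B]
    {f : A →ₗ[K] B} (hf : Function.Injective f) {P : Submodule K A} :
    Module.finrank K (P.map f) = Module.finrank K P :=
  (Submodule.equivMapOfInjective f hf P).symm.finrank_eq

theorem rank_nul {A B : Type} [AddCommGroup A] [Module K A] [AddCommGroup B] [Module K B]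
    (f : A →ₗ[K] B) (P : Submodule K A) [FiniteDimensional K P] :
    Module.finrank K (P.map f) + Module.finrank K ↥(LinearMap.ker f ⊓ P) = Module.finrank K P := by
  have h := LinearMap.finrank_range_add_finrank_ker (f.domRestrict P)
  rw [LinearMap.range_domRestrict] at h
  rw [← h]
  congr 1
  have h2 : LinearMap.ker f ⊓ P = (LinearMap.ker (f.domRestrict P)).map P.subtype := by
    ext x
    constructor
    · rintro ⟨h1, h2⟩
      exact ⟨⟨x, h2⟩, h1, rfl⟩
    · rintro ⟨⟨y, hy⟩, h1, rfl⟩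
      exact ⟨h1, hy⟩
  rw [h2]
  exact finrank_map_inj P.subtype_injective

variable {N : Type} [AddCommGroup N] [Module K N] (GN : ℤ → Submodule K N)

theorem barDGrade_isGr (h : IsGr GN) (i : ℕ) : IsGr (barDGrade K n N GN i) := by
  induction i with
  | zero => exact h
  | succ i ih => exact polyGrade_isGr.tensor ih

theorem barDGrade_isLF (h : IsLF GN) (i : ℕ) : IsLF (barDGrade K n N GN i) := by
  induction i with
  | zero => exact h
  | succ i ih => exact polyGrade_isLF.tensor ih

variable {GN} in
theorem tm_mem {i : ℕ} {p q d : ℤ} (h : p + q = d) {s : PS K n} {t} (hs : s ∈ polyGrade K n p)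
    (ht : t ∈ barDGrade K n N GN i q) : tm N i s t ∈ barDGrade K n N GN (i + 1) d :=
  tmul_mem h hs ht

theorem barDGrade_le (i : ℕ) (d : ℤ) (P : Submodule K (barD K n N (i + 1)))
    (h : ∀ p q, p + q = d → ∀ s ∈ polyGrade K n p, ∀ t ∈ barDGrade K n N GN i q, tm N i s t ∈ P) :
    barDGrade K n N GN (i + 1) d ≤ P :=
  tensorGrade_le _ _ d P h

theorem lm_mem {i : ℕ} {p q : ℤ} {s : PS K n} {t} (hs : s ∈ polyGrade K n p)
    (ht : t ∈ barDGrade K n N GN (i + 1) q) : lm N i s t ∈ barDGrade K n N GN (i + 1) (p + q) := by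
  refine barDGrade_le GN i q ((barDGrade K n N GN (i + 1) (p + q)).comap (lm N i s)) ?_ ht
  intro a b hab s' hs' t' ht'
  rw [Submodule.mem_comap, lm_tm]
  exact tm_mem (by omega) (polyGrade_mul hs hs') ht'

section
variable [Module (PS K n) N] [IsScalarTower K (PS K n) N]

theorem barC_mem (h : GrMod (n := n) N GN) (i : ℕ) : ∀ (d : ℤ), ∀ t ∈ barDGrade K n N GN (i + 1) d,
    barC K n N i t ∈ barDGrade K n N GN i d := by
  induction i with
  | zero =>
    intro d t ht
    refine barDGrade_le GN 0 d ((barDGrade K n N GN 0 d).comap (barC K n N 0)) ?_ ht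
    rintro a b rfl s hs x hx
    have := h.smul a b s hs x hx
    exact (congrArg (· ∈ GN (a + b)) (barC_zero N s x)).mpr this
  | succ i ih =>
    intro d t ht
    refine barDGrade_le GN (i + 1) d ((barDGrade K n N GN (i + 1) d).comap (barC K n N (i + 1))) ?_ ht
    rintro a b rfl s hs x hx
    rw [Submodule.mem_comap, barC_succ]
    exact Submodule.sub_mem _ (lm_mem GN hs hx) (tm_mem rfl hs (ih b x hx))
end

variable {M : Type} [AddCommGroup M] [Module K M] [Module (PS K n) M]
  [IsScalarTower K (PS K n) M] (GM : ℤ → Submodule K M)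

theorem am_mem (hM : GrMod (n := n) M GM) {i : ℕ} {p q : ℤ} {m : M} (hm : m ∈ GM p) {t}
    (ht : t ∈ barDGrade K n N GN (i + 1) q) :
    am N i m t ∈ tensorGrade K GM (barDGrade K n N GN i) (p + q) := by
  refine barDGrade_le GN i q ((tensorGrade K GM (barDGrade K n N GN i) (p + q)).comap (am N i m)) ?_ ht
  intro a b hab s' hs' t' ht'
  rw [Submodule.mem_comap, am_tm]
  exact tmul_mem (by omega) (hM.smul _ _ _ hs' _ hm) ht'

variable [Module (PS K n) N] [IsScalarTower K (PS K n) N]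

theorem barB_mem (hM : GrMod (n := n) M GM) (hN : GrMod (n := n) N GN) (i : ℕ) (d : ℤ) :
    ∀ z ∈ tensorGrade K GM (barDGrade K n N GN (i + 1)) d,
      barB K n N M i z ∈ tensorGrade K GM (barDGrade K n N GN i) d := by
  intro z hz
  refine tensorGrade_le _ _ d
    ((tensorGrade K GM (barDGrade K n N GN i) d).comap (barB K n N M i)) ?_ hz
  rintro a b rfl m hm t ht
  rw [Submodule.mem_comap, barB_tmul]
  exact Submodule.sub_mem _ (am_mem GN GM hM hm ht) (tmul_mem rfl hm (barC_mem GN hN i b t ht))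

/-- dimension of the strand -/
def xd (i : ℕ) (j : ℤ) : ℕ := Module.finrank K ↥(tensorGrade K GM (barDGrade K n N GN i) j)

/-- rank of the differential -/
def be (i : ℕ) (j : ℤ) : ℕ :=
  Module.finrank K ↥((tensorGrade K GM (barDGrade K n N GN (i + 1)) j).map (barB K n N M i))

theorem range_inf (hM : GrMod (n := n) M GM) (hN : GrMod (n := n) N GN) (i : ℕ) (j : ℤ) :
    LinearMap.range (barB K n N M i) ⊓ tensorGrade K GM (barDGrade K n N GN i) j =
      (tensorGrade K GM (barDGrade K n N GN (i + 1)) j).map (barB K n N M i) :=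
  (hM.gr.tensor (barDGrade_isGr GN hN.gr (i + 1))).strict (hM.gr.tensor (barDGrade_isGr GN hN.gr i))
    _ (barB_mem GN GM hM hN i) j

theorem ker_rank (hM : IsLF GM) (hN : IsLF GN) (i : ℕ) (j : ℤ) :
    be (n := n) GN GM i j + Module.finrank K ↥(LinearMap.ker (barB K n N M i) ⊓
      tensorGrade K GM (barDGrade K n N GN (i + 1)) j) = xd (n := n) GN GM (i + 1) j := by
  have := (hM.tensor (barDGrade_isLF (n := n) GN hN (i + 1))).1 j
  exact rank_nul _ _

theorem tor_zero (hM : GrMod (n := n) M GM) (hN : GrMod (n := n) N GN) (j : ℤ) :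
    torStrandDim K n N M GM GN 0 j = xd (n := n) GN GM 0 j - be (n := n) GN GM 0 j := by
  rw [torStrandDim, range_inf GN GM hM hN]; rfl

theorem tor_succ (hM : GrMod (n := n) M GM) (hN : GrMod (n := n) N GN) (hM' : IsLF GM)
    (hN' : IsLF GN) (i : ℕ) (j : ℤ) :
    torStrandDim K n N M GM GN (i + 1) j =
      (xd (n := n) GN GM (i + 1) j - be (n := n) GN GM i j) - be (n := n) GN GM (i + 1) j := by
  rw [torStrandDim, range_inf GN GM hM hN, ← ker_rank GN GM hM' hN' i j, Nat.add_sub_cancel_left]; rfl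

theorem tor_vanish (hM : IsLF GM) (hN : IsLF GN) (i : ℕ) (hi : n ≤ i) (j : ℤ) :
    torStrandDim K n N M GM GN (i + 1) j = 0 := by
  rw [torStrandDim, Nat.sub_eq_zero_iff_le]
  have := (hM.tensor (barDGrade_isLF (n := n) GN hN (i + 1))).1 j
  have h2 : FiniteDimensional K ↥(LinearMap.range (barB K n N M (i + 1)) ⊓
      tensorGrade K GM (barDGrade K n N GN (i + 1)) j) := Submodule.finiteDimensional_inf_right _ _
  exact Submodule.finrank_mono (inf_le_inf_right _ (ker_le_of_ge i hi))

section funct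
variable {N' : Type} [AddCommGroup N'] [Module K N'] [Module (PS K n) N']
  [IsScalarTower K (PS K n) N'] (GN' : ℤ → Submodule K N') (f : N →ₗ[PS K n] N')

variable {GN GN'}

theorem Dm_mem (hf : ∀ d, ∀ x ∈ GN d, f x ∈ GN' d) (i : ℕ) : ∀ d, ∀ t ∈ barDGrade K n N GN i d,
    Dm f i t ∈ barDGrade K n N' GN' i d := by
  induction i with
  | zero => exact hf
  | succ i ih => exact fun d t ht => tensorGrade_map LinearMap.id (Dm f i) (fun _ _ h => h) ih d t ht

variable {GM} in
theorem Cm_mem (hf : ∀ d, ∀ x ∈ GN d, f x ∈ GN' d) (i : ℕ) (d : ℤ) :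
    ∀ t ∈ tensorGrade K GM (barDGrade K n N GN i) d,
      Cm M f i t ∈ tensorGrade K GM (barDGrade K n N' GN' i) d :=
  fun t ht => tensorGrade_map LinearMap.id (Dm f i) (fun _ _ h => h) (Dm_mem f hf i) d t ht

variable {GM} in
theorem Cm_map (hM : GrMod (n := n) M GM) (hN : IsGr GN) (hN' : IsGr GN')
    (hf : ∀ d, ∀ x ∈ GN d, f x ∈ GN' d) (hs : Function.Surjective f) (i : ℕ) (d : ℤ) :
    (tensorGrade K GM (barDGrade K n N GN i) d).map (Cm M f i) =
      tensorGrade K GM (barDGrade K n N' GN' i) d :=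
  (hM.gr.tensor (barDGrade_isGr GN hN i)).strict_surj (hM.gr.tensor (barDGrade_isGr GN' hN' i))
    _ (Cm_mem f hf i) (Cm_surj f hs i) d

theorem map_be (f : N →ₗ[PS K n] N') (i : ℕ) (P : Submodule K (M ⊗[K] barD K n N (i + 1))) :
    (P.map (Cm M f (i + 1))).map (barB K n N' M i) = (P.map (barB K n N M i)).map (Cm M f i) := by
  rw [← Submodule.map_comp, ← Submodule.map_comp]
  have : (barB K n N' M i).comp (Cm M f (i + 1)) = (Cm M f i).comp (barB K n N M i) :=
    LinearMap.ext fun z => (Cm_barB f i z).symm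
  rw [this]

theorem iso_be (hM : GrMod (n := n) M GM) (hN : IsGr GN) (hN' : IsGr GN')
    (hf : ∀ d, ∀ x ∈ GN d, f x ∈ GN' d) (hb : Function.Bijective f) (i : ℕ) (j : ℤ) :
    be (n := n) GN' GM i j = be (n := n) GN GM i j := by
  rw [be, ← Cm_map f hM hN hN' hf hb.2, map_be]
  exact finrank_map_inj (Cm_inj f hb.1 i)

theorem iso_xd (hM : GrMod (n := n) M GM) (hN : IsGr GN) (hN' : IsGr GN')
    (hf : ∀ d, ∀ x ∈ GN d, f x ∈ GN' d) (hb : Function.Bijective f) (i : ℕ) (j : ℤ) :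
    xd (n := n) GN' GM i j = xd (n := n) GN GM i j := by
  rw [xd, ← Cm_map f hM hN hN' hf hb.2]
  exact finrank_map_inj (Cm_inj f hb.1 i)

variable {N'' : Type} [AddCommGroup N''] [Module K N''] [Module (PS K n) N'']
  [IsScalarTower K (PS K n) N''] {GN'' : ℤ → Submodule K N''} (q : N' →ₗ[PS K n] N'')

theorem be_step (hM : GrMod (n := n) M GM) (hN : GrMod (n := n) N GN) (hN' : GrMod (n := n) N' GN')
    (hN'' : GrMod (n := n) N'' GN'') (hMl : IsLF GM) (hNl : IsLF GN) (hNl' : IsLF GN')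
    (hf : ∀ d, ∀ x ∈ GN d, f x ∈ GN' d) (hq : ∀ d, ∀ x ∈ GN' d, q x ∈ GN'' d)
    (hex : Function.Exact f q) (hi : Function.Injective f) (hs : Function.Surjective q)
    (i : ℕ) (j : ℤ)
    (hp : LinearMap.ker (barB K n N' M i) ≤ LinearMap.range (barB K n N' M (i + 1))) :
    be (n := n) GN'' GM (i + 1) j + xd (n := n) GN GM (i + 1) j =
      be (n := n) GN' GM (i + 1) j + be (n := n) GN GM i j := by
  rw [← ker_rank GN GM hMl hNl i j, be, ← Cm_map q hM hN'.gr hN''.gr hq hs, map_be]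
  have hfd := (hMl.tensor (barDGrade_isLF (n := n) GN' hNl' (i + 1 + 1))).1 j
  have h1 := rank_nul (Cm M q (i + 1))
    ((tensorGrade K GM (barDGrade K n N' GN' (i + 1 + 1)) j).map (barB K n N' M (i + 1)))
  have h2 : LinearMap.ker (Cm M q (i + 1)) ⊓
      (tensorGrade K GM (barDGrade K n N' GN' (i + 1 + 1)) j).map (barB K n N' M (i + 1)) =
      (LinearMap.ker (barB K n N M i) ⊓
        tensorGrade K GM (barDGrade K n N GN (i + 1)) j).map (Cm M f (i + 1)) := by
    rw [← range_inf GN' GM hM hN']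
    ext x
    constructor
    · rintro ⟨h1, ⟨z, hz⟩, h3⟩
      obtain ⟨y, rfl⟩ := (Cm_exact f q hex hs (i + 1) x).1 h1
      refine ⟨y, ⟨?_, ?_⟩, rfl⟩
      · rw [SetLike.mem_coe, LinearMap.mem_ker]
        apply Cm_inj f hi i
        rw [Cm_barB, ← hz, bb, map_zero]
      · exact (hM.gr.tensor (barDGrade_isGr GN hN.gr (i + 1))).strict_inj
          (hM.gr.tensor (barDGrade_isGr GN' hN'.gr (i + 1))) _ (Cm_mem f hf (i + 1))
          (Cm_inj f hi (i + 1)) j y h3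
    · rintro ⟨y, ⟨h1, h2⟩, rfl⟩
      refine ⟨(Cm_exact f q hex hs (i + 1)).apply_apply_eq_zero y, hp ?_, Cm_mem f hf (i + 1) j y h2⟩
      rw [LinearMap.mem_ker, ← Cm_barB, LinearMap.mem_ker.1 h1, map_zero]
  rw [h2, finrank_map_inj (Cm_inj f hi (i + 1))] at h1
  rw [be, be, ← h1]
  ring

end funct
end bargr
end TG
end

noncomputable section
open MvPolynomial TensorProduct CategoryTheory
namespace TG
section tw
variable {K : Type} [Field K] {n : ℕ}

theorem cC_X (g : GL (Fin n) K) (i : Fin n) : coordChange K n g (X i) =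
    ∑ j, ((g : Matrix (Fin n) (Fin n) K) j i) • (X j : PS K n) := aeval_X _ _

theorem cC_mul (g h : GL (Fin n) K) (s : PS K n) :
    coordChange K n g (coordChange K n h s) = coordChange K n (g * h) s := by
  have : (coordChange K n g).comp (coordChange K n h) = coordChange K n (g * h) := by
    refine MvPolynomial.algHom_ext fun i => ?_
    rw [AlgHom.comp_apply, cC_X, cC_X, map_sum]
    simp only [map_smul, cC_X, Units.val_mul, Matrix.mul_apply, Finset.smul_sum, Finset.sum_smul,
      smul_smul]
    rw [Finset.sum_comm]
    refine Finset.sum_congr rfl fun a _ => Finset.sum_congr rfl fun b _ => ?_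
    rw [mul_comm]
  exact AlgHom.congr_fun this s

theorem cC_one (s : PS K n) : coordChange K n 1 s = s := by
  have : coordChange K n 1 = AlgHom.id K (PS K n) := by
    refine MvPolynomial.algHom_ext fun i => ?_
    rw [cC_X]
    simp [Matrix.one_apply]
  rw [this]; rfl

theorem cC_inv (g : GL (Fin n) K) (s : PS K n) :
    coordChange K n g (coordChange K n g⁻¹ s) = s := by
  rw [cC_mul, mul_inv_cancel, cC_one]

theorem cC_inv' (g : GL (Fin n) K) (s : PS K n) :
    coordChange K n g⁻¹ (coordChange K n g s) = s := by
  rw [cC_mul, inv_mul_cancel, cC_one]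

theorem cC_mem (g : GL (Fin n) K) (d : ℤ) (s : PS K n) (hs : s ∈ polyGrade K n d) :
    coordChange K n g s ∈ polyGrade K n d := by
  rcases lt_or_ge d 0 with hd | hd
  · rw [polyGrade_neg hd, Submodule.mem_bot] at hs
    subst hs; simp
  · obtain ⟨d, rfl⟩ := Int.eq_ofNat_of_zero_le hd
    rw [mem_polyGrade_nat] at hs ⊢
    have := IsHomogeneous.aeval (n := 1) hs
      (fun i => ∑ j, ((g : Matrix (Fin n) (Fin n) K) j i) • (X j : PS K n)) (by
        intro i
        refine IsHomogeneous.sum _ _ _ fun j _ => ?_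
        exact (homogeneousSubmodule (Fin n) K 1).smul_mem _ (isHomogeneous_X K j))
    rwa [one_mul] at this

theorem pp_cC (g : GL (Fin n) K) (d : ℤ) (s : PS K n) :
    pp d (coordChange K n g s) = coordChange K n g (pp d s) := by
  refine ind polyGrade_top (P := fun s : PS K n =>
    pp d (coordChange K n g s) = coordChange K n g (pp d s)) ?_ ?_ ?_ s
  · intro e x hx
    rw [pp_spec d e _ (cC_mem g e x hx), pp_spec d e x hx]
    split_ifs <;> simp
  · simp
  · intro x y hx hy; simp only [map_add, hx, hy]

/-- twist of a module by `g` -/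
def Tw (_g : GL (Fin n) K) (N : Type) : Type := N

variable (g : GL (Fin n) K) {N : Type} [AddCommGroup N] [Module K N] [Module (PS K n) N]
  [IsScalarTower K (PS K n) N]

instance : AddCommGroup (Tw g N) := inferInstanceAs (AddCommGroup N)
instance : Module K (Tw g N) := inferInstanceAs (Module K N)
instance : Module (PS K n) (Tw g N) := Module.compHom N (coordChange K n g⁻¹).toRingHom

/-- the identity to the twist -/
def toTw : N ≃ₗ[K] Tw g N := LinearEquiv.refl K N

theorem Tw_smul (s : PS K n) (x : N) : s • toTw g x = toTw g (coordChange K n g⁻¹ s • x) := rfl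

instance : IsScalarTower K (PS K n) (Tw g N) := ⟨fun c s x => by
  change toTw g (coordChange K n g⁻¹ (c • s) • (toTw g).symm x) =
    c • toTw g (coordChange K n g⁻¹ s • (toTw g).symm x)
  rw [map_smul (coordChange K n g⁻¹) c s]
  change toTw g ((c • coordChange K n g⁻¹ s) • (show N from x)) =
    toTw g (c • (coordChange K n g⁻¹ s • (show N from x)))
  rw [smul_assoc]⟩

/-- the grading on the twist -/
def TwG (GN : ℤ → Submodule K N) : ℤ → Submodule K (Tw g N) := GN

theorem Tw_grMod {GN : ℤ → Submodule K N} (h : GrMod (n := n) N GN) :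
    GrMod (n := n) (Tw g N) (TwG g GN) := by
  refine ⟨h.gr, ?_⟩
  intro p q s hs x hx
  exact h.smul p q _ (cC_mem _ _ _ hs) x hx

/-- functoriality of twist -/
def twm {N' : Type} [AddCommGroup N'] [Module (PS K n) N'] [Module K N']
  (f : N →ₗ[PS K n] N') : Tw g N →ₗ[PS K n] Tw g N' where
  toFun := f
  map_add' := map_add f
  map_smul' s x := map_smul f (coordChange K n g⁻¹ s) (show N from x)

/-- a free module is isomorphic to its twist -/
def frTw (r : ℕ) : (Fin r → PS K n) ≃ₗ[PS K n] Tw g (Fin r → PS K n) where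
  toFun v := toTw g (fun b => coordChange K n g⁻¹ (v b))
  invFun v := fun b => coordChange K n g ((toTw g).symm v b)
  map_add' v w := by
    rw [← map_add]; congr 1; ext1 b; simp
  map_smul' s v := by
    rw [RingHom.id_apply, Tw_smul]; congr 1; ext1 b; simp
  left_inv v := by
    ext1 b; simp [cC_inv]
  right_inv v := by
    apply (toTw g).symm.injective
    ext1 b; simp [cC_inv']

theorem frTw_mem {r : ℕ} (β : Fin r → ℤ) (d : ℤ) (v) (hv : v ∈ FrG (K := K) (n := n) β d) :
    frTw g r v ∈ TwG g (FrG β) d := by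
  rw [mem_FrG] at hv
  exact (mem_FrG β d _).2 fun b => cC_mem _ _ _ (hv b)

section quot
variable (J : Ideal (PS K n))

theorem mem_mapJ (s : PS K n) :
    s ∈ Ideal.map (coordChange K n g) J ↔ coordChange K n g⁻¹ s ∈ J := by
  constructor
  · intro h
    have h1 : Ideal.map (coordChange K n g) J ≤ Ideal.comap (coordChange K n g⁻¹) J := by
      rw [Ideal.map_le_iff_le_comap]
      intro x hx
      rw [Ideal.mem_comap, Ideal.mem_comap, cC_inv']
      exact hx
    exact h1 h
  · intro h
    rw [← cC_inv g s]
    exact Ideal.mem_map_of_mem _ h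

theorem mapJ_homog (hJ : IsHomog K n J) : IsHomog K n (Ideal.map (coordChange K n g) J) := by
  intro f hf d
  rw [mem_mapJ] at hf ⊢
  have hpp : ∀ s : PS K n, homogeneousComponent d s = pp (d : ℤ) s := by
    intro s
    rw [pp, if_pos (by omega), Int.toNat_natCast]
  rw [hpp, ← pp_cC, ← hpp]
  exact hJ _ hf d

/-- the comparison map -/
def qTw : (PS K n ⧸ Ideal.map (coordChange K n g) J) →ₗ[PS K n] Tw g (PS K n ⧸ J) :=
  Submodule.liftQ (Ideal.map (coordChange K n g) J)
    { toFun := fun s => toTw g (Ideal.Quotient.mk J (coordChange K n g⁻¹ s))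
      map_add' := fun x y => by rw [map_add, map_add, map_add]
      map_smul' := fun s x => by
        rw [RingHom.id_apply, Tw_smul, smul_eq_mul, map_mul, map_mul]; rfl }
    (by
      intro s hs
      rw [mem_mapJ] at hs
      rw [LinearMap.mem_ker]
      change toTw g (Ideal.Quotient.mk J (coordChange K n g⁻¹ s)) = 0
      rw [Ideal.Quotient.eq_zero_iff_mem.2 hs, map_zero])

theorem qTw_mk (s : PS K n) : qTw g J (Ideal.Quotient.mk _ s) =
    toTw g (Ideal.Quotient.mk J (coordChange K n g⁻¹ s)) := rfl

theorem qTw_bij : Function.Bijective (qTw g J) := by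
  constructor
  · rw [← LinearMap.ker_eq_bot, LinearMap.ker_eq_bot']
    intro x hx
    obtain ⟨s, rfl⟩ := Ideal.Quotient.mk_surjective x
    rw [qTw_mk, LinearEquiv.map_eq_zero_iff, Ideal.Quotient.eq_zero_iff_mem] at hx
    rw [Ideal.Quotient.eq_zero_iff_mem, mem_mapJ]
    exact hx
  · intro x
    obtain ⟨s, hs⟩ := Ideal.Quotient.mk_surjective ((toTw g).symm x)
    refine ⟨Ideal.Quotient.mk _ (coordChange K n g s), ?_⟩
    rw [qTw_mk, cC_inv', hs, LinearEquiv.apply_symm_apply]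

theorem qTw_gr (d : ℤ) (x) (hx : x ∈ quotGrade K n (Ideal.map (coordChange K n g) J) d) :
    qTw g J x ∈ TwG g (quotGrade K n J) d := by
  obtain ⟨s, hs, rfl⟩ := hx
  exact ⟨coordChange K n g⁻¹ s, cC_mem _ _ _ hs, rfl⟩

end quot

/-- untwisted -/
def oneTw : N →ₗ[PS K n] Tw (1 : GL (Fin n) K) N where
  toFun := toTw 1
  map_add' := map_add _
  map_smul' s x := by rw [RingHom.id_apply, Tw_smul, inv_one, cC_one]

variable {M : Type} [AddCommGroup M] [Module K M] [Module (PS K n) M]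
  [IsScalarTower K (PS K n) M] (GM : ℤ → Submodule K M)

/-- generic maximality of the ranks -/
def Gen (i : ℕ) : Prop := ∀ (N : Type) [AddCommGroup N] [Module K N] [Module (PS K n) N]
  [IsScalarTower K (PS K n) N] (GN : ℤ → Submodule K N), GrMod (n := n) N GN →
  Module.Finite (PS K n) N → ∃ f : MvPolynomial (Fin n × Fin n) K, f ≠ 0 ∧
    ∀ g : GL (Fin n) K, eval (fun p => (g : Matrix (Fin n) (Fin n) K) p.1 p.2) f ≠ 0 →
      ∀ (g0 : GL (Fin n) K) (j : ℤ), be (n := n) (TwG g0 GN) GM i j ≤ be (n := n) (TwG g GN) GM i j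

theorem Gen.succ (hM : GrMod (n := n) M GM) (hMf : Module.Finite (PS K n) M) (i : ℕ)
    (h : Gen (n := n) GM i) : Gen (n := n) GM (i + 1) := by
  intro N _ _ _ _ GN hN hNf
  obtain ⟨r, β, ν, hν, hs⟩ := hN.gens
  let q := cov (K := K) (n := n) ν
  have hqs : Function.Surjective q := cov_surj ν hs
  have hqg : ∀ d, ∀ x ∈ FrG (K := K) (n := n) β d, q x ∈ GN d := fun d v hv => cov_gr hN hν d v hv
  have hF := FrG_grMod (K := K) (n := n) β
  have hN' := GrMod.ker hN hF q hqg
  have hN'f : Module.Finite (PS K n) (LinearMap.ker q) := inferInstance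
  obtain ⟨f, hf0, hf⟩ := h (LinearMap.ker q) _ hN' hN'f
  refine ⟨f, hf0, ?_⟩
  have hl := GrMod.isLF hN'
  have hl2 := FrG_isLF (K := K) (n := n) β
  have key : ∀ (g : GL (Fin n) K) j,
      be (n := n) (TwG g GN) GM (i + 1) j + xd (n := n) (N := LinearMap.ker q)
        (fun d => (FrG (K := K) (n := n) β d).comap ((LinearMap.ker q).subtype.restrictScalars K)) GM (i + 1) j =
      be (n := n) (FrG (K := K) (n := n) β) GM (i + 1) j + be (n := n) (TwG g (N := LinearMap.ker q)
        (fun d => (FrG (K := K) (n := n) β d).comap ((LinearMap.ker q).subtype.restrictScalars K))) GM i j := by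
    intro g j
    have hp : Module.Projective (PS K n) (Tw g (Fin r → PS K n)) :=
      Module.Projective.of_equiv (frTw g r)
    have e1 := be_step GM (twm g (LinearMap.ker q).subtype) (twm g q) hM (Tw_grMod g hN')
      (Tw_grMod g hF) (Tw_grMod g hN) hM.isLF hl hl2 (fun d x hx => hx)
      hqg (LinearMap.exact_subtype_ker_map q) Subtype.val_injective hqs i j (ker_le_of_projective i)
    rw [← iso_be GM (frTw g r).toLinearMap hM hF.gr (Tw_grMod g hF).gr (frTw_mem g β)
      (frTw g r).bijective]
    exact e1
  intro g hg g0 j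
  have := key g j
  have := key g0 j
  have := hf g hg g0 j
  omega

end tw
end TG
end

noncomputable section
open MvPolynomial TensorProduct CategoryTheory
namespace TG
section ab
variable {K : Type} [Field K] {A : Type} [CommRing A] [IsDomain A] [Algebra K A]
  {Λ T : Type}

/-- specialization of coefficients -/
def sp (ev : A →ₐ[K] K) : (Λ →₀ A) →ₗ[K] (Λ →₀ K) := Finsupp.mapRange.linearMap ev.toLinearMap

theorem sp_apply (ev : A →ₐ[K] K) (v : Λ →₀ A) (l : Λ) : sp ev v l = ev (v l) := rfl

theorem sp_smul (ev : A →ₐ[K] K) (a : A) (v : Λ →₀ A) : sp ev (a • v) = ev a • sp ev v := by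
  ext l; simp [sp_apply]

/-- generic span -/
def VA (u : T → (Λ →₀ A)) (deg : T → ℤ) (j : ℤ) : Submodule A (Λ →₀ A) :=
  Submodule.span A (u '' {t | deg t = j})

def VK (ev : A →ₐ[K] K) (u : T → (Λ →₀ A)) (deg : T → ℤ) (j : ℤ) : Submodule K (Λ →₀ K) :=
  Submodule.span K ((fun t => sp ev (u t)) '' {t | deg t = j})

theorem sp_mem (ev : A →ₐ[K] K) (u : T → (Λ →₀ A)) (deg : T → ℤ) (j : ℤ) (v : Λ →₀ A)
    (hv : v ∈ VA u deg j) : sp ev v ∈ VK ev u deg j := by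
  induction hv using Submodule.span_induction with
  | mem x h =>
    obtain ⟨t, ht, rfl⟩ := h
    exact Submodule.subset_span ⟨t, ht, rfl⟩
  | zero => rw [map_zero]; exact zero_mem _
  | add x y _ _ hx hy => rw [map_add]; exact add_mem hx hy
  | smul a x _ hx => rw [sp_smul]; exact Submodule.smul_mem _ _ hx

theorem tri [LinearOrder Λ] (E : Set Λ) (v : E → (Λ →₀ K)) (h1 : ∀ l : E, v l l ≠ 0)
    (h2 : ∀ (l : E) (m : Λ), v l m ≠ 0 → m ≤ l) : LinearIndependent K v := by
  classical
  rw [linearIndependent_iff]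
  intro c hc
  by_contra hne
  have hs : c.support.Nonempty := Finsupp.support_nonempty_iff.2 hne
  let m := c.support.max' hs
  have hm : m ∈ c.support := c.support.max'_mem hs
  have h := DFunLike.congr_fun hc (m : Λ)
  rw [Finsupp.linearCombination_apply, Finsupp.sum, Finsupp.finset_sum_apply,
    Finset.sum_eq_single m] at h
  · simp only [Finsupp.smul_apply, smul_eq_mul, Finsupp.zero_apply, mul_eq_zero] at h
    exact h.elim (Finsupp.mem_support_iff.1 hm) (h1 m)
  · intro b hb hbm
    by_contra h0
    have h3 : v b m ≠ 0 := by
      intro h4; apply h0; rw [Finsupp.smul_apply, h4, smul_zero]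
    exact hbm (le_antisymm (c.support.le_max' b hb) (h2 b m h3))
  · intro h'; exact absurd hm h'

theorem lemG [LinearOrder Λ] {E 𝒢 : Type} (ev : 𝒢 → A →ₐ[K] K) (sh : E → Λ → Λ)
    (hsh : ∀ e, StrictMono (sh e)) (w : Λ → ℤ) (ew : E → ℤ)
    (hw : ∀ e l, w (sh e l) = w l + ew e) (hfin : ∀ j, {l | w l = j}.Finite)
    (u : T → (Λ →₀ A)) (deg : T → ℤ) (hu : ∀ t l, u t l ≠ 0 → w l = deg t)
    (hush : ∀ e t, ∃ t', deg t' = deg t + ew e ∧ (u t).mapDomain (sh e) = u t')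
    (hD : ∀ s : Set Λ, ∃ F : Finset Λ, (∀ m ∈ F, m ∈ s) ∧ ∀ l ∈ s, ∃ m ∈ F, ∃ e, l = sh e m) :
    ∃ f : A, f ≠ 0 ∧ ∀ g, ev g f ≠ 0 → ∀ g0 j,
      Module.finrank K (VK (ev g0) u deg j) ≤ Module.finrank K (VK (ev g) u deg j) := by
  classical
  let EE : Set Λ := {l | ∃ v ∈ VA u deg (w l), v l ≠ 0 ∧ ∀ m, v m ≠ 0 → m ≤ l}
  obtain ⟨F, hF1, hF2⟩ := hD EE
  have hF1' : ∀ m : F, ∃ v ∈ VA u deg (w m), v m ≠ 0 ∧ ∀ k, v k ≠ 0 → k ≤ m :=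
    fun m => hF1 m m.2
  choose V hV1 hV2 hV3 using hF1'
  have hVA : ∀ j v, v ∈ VA u deg j → ∀ l, v l ≠ 0 → w l = j := by
    intro j v hv
    have : VA u deg j ≤ Finsupp.supported A A {l | w l = j} := by
      refine Submodule.span_le.2 ?_
      rintro _ ⟨t, ht, rfl⟩
      intro l hl
      exact (hu t l (Finsupp.mem_support_iff.1 hl)).trans ht
    intro l hl
    exact this hv (Finsupp.mem_support_iff.2 hl)
  have hVK : ∀ g j, VK (ev g) u deg j ≤ Finsupp.supported K K {l | w l = j} := by
    intro g j
    refine Submodule.span_le.2 ?_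
    rintro _ ⟨t, ht, rfl⟩
    intro l hl
    refine (hu t l ?_).trans ht
    intro h0
    apply Finsupp.mem_support_iff.1 hl
    simp only [sp_apply, h0, map_zero]
  have hfd0 : ∀ j, FiniteDimensional K (Finsupp.supported K K {l | w l = j}) := by
    intro j
    have := (hfin j).to_subtype
    exact Module.Finite.equiv (Finsupp.supportedEquivFinsupp (M := K) (R := K) {l | w l = j}).symm
  have hfd : ∀ g j, FiniteDimensional K (VK (ev g) u deg j) := by
    intro g j
    have := hfd0 j
    exact Submodule.finiteDimensional_of_le (hVK g j)
  refine ⟨∏ m : F, V m m, Finset.prod_ne_zero_iff.2 fun m _ => hV2 m, ?_⟩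
  intro g hg g0 j
  have hg' : ∀ m : F, ev g (V m m) ≠ 0 := by
    intro m
    rw [map_prod] at hg
    exact Finset.prod_ne_zero_iff.1 hg m (Finset.mem_univ _)
  let Ej : Set Λ := {l | l ∈ EE ∧ w l = j}
  have hEf : Finite Ej := ((hfin j).subset fun l hl => hl.2).to_subtype
  have : Fintype Ej := Fintype.ofFinite _
  have key1 : Fintype.card Ej ≤ Module.finrank K (VK (ev g) u deg j) := by
    have hx : ∀ l : Ej, ∃ v ∈ VK (ev g) u deg j, v l ≠ 0 ∧ ∀ m, v m ≠ 0 → m ≤ l := by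
      rintro ⟨l, hl, hj⟩
      obtain ⟨m, hm, e, rfl⟩ := hF2 l hl
      let v := V ⟨m, hm⟩
      have hvm : v.mapDomain (sh e) ∈ VA u deg j := by
        have h1 : v ∈ VA u deg (w m) := hV1 ⟨m, hm⟩
        have h2 : VA u deg (w m) ≤ (VA u deg j).comap (Finsupp.lmapDomain A A (sh e)) := by
          refine Submodule.span_le.2 ?_
          rintro _ ⟨t, ht, rfl⟩
          obtain ⟨t', h3, h4⟩ := hush e t
          refine Submodule.subset_span ⟨t', ?_, ?_⟩
          · change deg t = _ at ht
            change deg t' = j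
            rw [h3, ht, ← hw, hj]
          · rw [Finsupp.lmapDomain_apply, h4]
        exact h2 h1
      refine ⟨_, sp_mem (ev g) u deg j _ hvm, ?_, ?_⟩
      · rw [sp_apply, Finsupp.mapDomain_apply (hsh e).injective]
        exact hg' ⟨m, hm⟩
      · intro k hk
        by_cases hkr : k ∈ Set.range (sh e)
        · obtain ⟨k, rfl⟩ := hkr
          rw [sp_apply, Finsupp.mapDomain_apply (hsh e).injective] at hk
          refine (hsh e).monotone (hV3 ⟨m, hm⟩ k fun h0 => hk ?_)
          rw [show v k = 0 from h0, map_zero]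
        · rw [sp_apply, Finsupp.mapDomain_notin_range _ _ hkr, map_zero] at hk
          exact absurd rfl hk
    choose v hv1 hv2 hv3 using hx
    have hli := tri (K := K) Ej v hv2 hv3
    have hli' : LinearIndependent K (fun l => (⟨v l, hv1 l⟩ : VK (ev g) u deg j)) :=
      LinearIndependent.of_comp (VK (ev g) u deg j).subtype hli
    have := hfd g j
    exact hli'.fintype_card_le_finrank
  refine le_trans ?_ key1
  have hfd1 := hfd g0 j
  obtain ⟨b, hb1, hb2, hb3⟩ := exists_linearIndependent K
    ((fun t => sp (ev g0) (u t)) '' {t | deg t = j})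
  have hb2' : Submodule.span K b = VK (ev g0) u deg j := hb2
  have hbf : Finite b := by
    have h5 : LinearIndependent K (fun x : b => (⟨x, by
      rw [← hb2']; exact Submodule.subset_span x.2⟩ : VK (ev g0) u deg j)) :=
      LinearIndependent.of_comp (VK (ev g0) u deg j).subtype hb3
    exact h5.finite
  have : Fintype b := Fintype.ofFinite _
  have hcard : Module.finrank K (VK (ev g0) u deg j) = Fintype.card b := by
    rw [← hb2', finrank_span_set_eq_card hb3, Set.toFinset_card]
  rw [hcard]
  have hb1' : ∀ x : b, ∃ t, deg t = j ∧ sp (ev g0) (u t) = x := fun x => hb1 x.2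
  choose t ht1 ht2 using hb1'
  have hphi : ∀ x : b, ∃ φ : (Λ →₀ K) →ₗ[K] K, ∀ y : b, φ y = if x = y then 1 else 0 := by
    intro x
    have hb4 : LinearIndepOn K id b := hb3
    let B := Module.Basis.extend hb4
    let ii : b → hb4.extend (Set.subset_univ b) := fun y => ⟨y, hb4.subset_extend _ y.2⟩
    refine ⟨B.coord (ii x), fun y => ?_⟩
    have hB : B (ii y) = (y : Λ →₀ K) := Module.Basis.extend_apply_self hb4 (ii y)
    rw [← hB, Module.Basis.coord_apply, Module.Basis.repr_self, Finsupp.single_apply]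
    have : ii y = ii x ↔ x = y := by
      simp [ii, Subtype.ext_iff, eq_comm]
    simp only [this]
  choose φ hφ using hphi
  let Φ : b → (Λ →₀ A) →ₗ[A] A := fun x =>
    Finsupp.linearCombination A (fun l => algebraMap K A (φ x (Finsupp.single l 1)))
  have hΦ : ∀ x v, ev g0 (Φ x v) = φ x (sp (ev g0) v) := by
    intro x v
    induction v using Finsupp.induction_linear with
    | zero => simp
    | add v w hv hw => simp only [map_add, hv, hw]
    | single l a =>
      have : sp (ev g0) (Finsupp.single l a) = ev g0 a • Finsupp.single l (1 : K) := by
        simp [sp]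
      rw [this, map_smul]
      simp [Φ]
  have hind : ∀ a : b → A, ∑ x, a x • u (t x) = 0 → a = 0 := by
    intro a ha
    let Q : Matrix b b A := Matrix.of fun x y => Φ x (u (t y))
    have hdet : Q.det ≠ 0 := by
      intro h0
      have h1 : ev g0 Q.det = 0 := by rw [h0, map_zero]
      rw [AlgHom.map_det] at h1
      have h2 : (ev g0).mapMatrix Q = 1 := by
        ext x y
        simp only [AlgHom.mapMatrix_apply, Matrix.map_apply, Q, Matrix.of_apply, hΦ, ht2, hφ,
          Matrix.one_apply]
      rw [h2, Matrix.det_one] at h1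
      exact one_ne_zero h1
    apply Matrix.eq_zero_of_mulVec_eq_zero hdet
    ext x
    have := congrArg (Φ x) ha
    rw [map_zero, map_sum] at this
    rw [Matrix.mulVec, dotProduct, Pi.zero_apply, ← this]
    refine Finset.sum_congr rfl fun y _ => ?_
    rw [map_smul, smul_eq_mul, mul_comm]; rfl
  let Θ : (b → A) →ₗ[A] (Ej → A) :=
    LinearMap.pi fun l => (Finsupp.lapply (l : Λ)).comp
      (Fintype.linearCombination A (fun x => u (t x)))
  refine card_le_of_injective A Θ ?_
  rw [← LinearMap.ker_eq_bot, LinearMap.ker_eq_bot']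
  intro a ha
  apply hind
  set v := ∑ x, a x • u (t x) with hv
  by_contra hne
  have hs : v.support.Nonempty := Finsupp.support_nonempty_iff.2 hne
  let m := v.support.max' hs
  have hm : v m ≠ 0 := Finsupp.mem_support_iff.1 (v.support.max'_mem hs)
  have hvm : v ∈ VA u deg j := by
    refine Submodule.sum_mem _ fun x _ => Submodule.smul_mem _ _ (Submodule.subset_span ?_)
    exact ⟨t x, ht1 x, rfl⟩
  have hwm : w m = j := hVA j v hvm m hm
  have hmE : m ∈ Ej := by
    refine ⟨⟨v, by rw [hwm]; exact hvm, hm, fun k hk => ?_⟩, hwm⟩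
    exact v.support.le_max' k (Finsupp.mem_support_iff.2 hk)
  have := congrFun ha ⟨m, hmE⟩
  apply hm
  simpa [Θ, Fintype.linearCombination_apply, hv] using this

theorem dickson {σ : Type} [Finite σ] (s : Set (σ →₀ ℕ)) :
    ∃ F : Finset (σ →₀ ℕ), (∀ m ∈ F, m ∈ s) ∧ ∀ l ∈ s, ∃ m ∈ F, m ≤ l := by
  classical
  have h1 : {x | Minimal (· ∈ s) x}.Finite := by
    have h2 : s.PartiallyWellOrderedOn (· ≤ ·) := Set.isPWO_of_wellQuasiOrderedLE s
    have h3 : {x | Minimal (· ∈ s) x}.PartiallyWellOrderedOn (· ≤ ·) :=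
      h2.mono fun x hx => hx.prop
    exact (setOf_minimal_antichain (· ∈ s)).finite_of_partiallyWellOrderedOn h3
  refine ⟨h1.toFinset, fun m hm => ((h1.mem_toFinset).1 hm).prop, fun l hl => ?_⟩
  obtain ⟨m, hm1, hm2⟩ := exists_minimal_le_of_wellFoundedLT (· ∈ s) l hl
  exact ⟨m, h1.mem_toFinset.2 hm2, hm1⟩

end ab
end TG
end

noncomputable section
open MvPolynomial TensorProduct CategoryTheory
namespace TG
section lam

/-- exponents -/
abbrev Ex (n : ℕ) : Type := (Fin n ⊕ Fin n) →₀ ℕ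

/-- index set of monomial tensors -/
def Lam (n r s : ℕ) : Type := Fin r × Fin s × Ex n

/-- constructor -/
def mkL {n r s : ℕ} (a : Fin r) (b : Fin s) (e : Ex n) : Lam n r s := (a, b, e)

/-- order embedding data -/
def lamLex {n r s : ℕ} (l : Lam n r s) : Fin r ×ₗ (Fin s ×ₗ Lex (Fin (n + n) →₀ ℕ)) :=
  toLex (l.1, toLex (l.2.1, toLex (l.2.2.mapDomain finSumFinEquiv)))

theorem lamLex_inj {n r s : ℕ} : Function.Injective (lamLex (n := n) (r := r) (s := s)) := by
  rintro ⟨a, b, e⟩ ⟨a', b', e'⟩ h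
  have h1 := congrArg Prod.fst (toLex.injective h)
  have h2 := toLex.injective (congrArg Prod.snd (toLex.injective h))
  have h3 := congrArg Prod.fst h2
  have h4 := Finsupp.mapDomain_injective finSumFinEquiv.injective
    (toLex.injective (congrArg Prod.snd h2))
  simp only at h1 h3 h4
  subst h1 h3 h4
  rfl

instance (n r s : ℕ) : LinearOrder (Lam n r s) := LinearOrder.lift' lamLex lamLex_inj

def shf {n r s : ℕ} (e : Ex n) (l : Lam n r s) : Lam n r s := (l.1, l.2.1, l.2.2 + e)

theorem shf_comm {n r s : ℕ} (e e' : Ex n) (l : Lam n r s) :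
    shf e (shf e' l) = shf e' (shf e l) := by
  change mkL l.1 l.2.1 (l.2.2 + e' + e) = mkL l.1 l.2.1 (l.2.2 + e + e')
  rw [add_right_comm]

theorem shf_mono {n r s : ℕ} (e : Ex n) : StrictMono (shf (r := r) (s := s) e) := by
  rintro ⟨a, b, x⟩ ⟨a', b', x'⟩ h
  change lamLex _ < lamLex _ at h
  change lamLex _ < lamLex _
  simp only [lamLex, Prod.Lex.toLex_lt_toLex, shf, Finsupp.mapDomain_add, toLex_add] at h ⊢
  rcases h with h | ⟨h, h' | ⟨h', h''⟩⟩
  · exact Or.inl h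
  · exact Or.inr ⟨h, Or.inl h'⟩
  · exact Or.inr ⟨h, Or.inr ⟨h', add_lt_add_left h'' _⟩⟩

def wt {n r s : ℕ} (α : Fin r → ℤ) (β : Fin s → ℤ) (l : Lam n r s) : ℤ :=
  α l.1 + β l.2.1 + (l.2.2.degree : ℤ)

theorem wt_shf {n r s : ℕ} (α : Fin r → ℤ) (β : Fin s → ℤ) (e : Ex n) (l : Lam n r s) :
    wt α β (shf e l) = wt α β l + (e.degree : ℤ) := by
  simp only [wt, shf, map_add]; push_cast; ring

theorem wt_fin {n r s : ℕ} (α : Fin r → ℤ) (β : Fin s → ℤ) (j : ℤ) :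
    {l : Lam n r s | wt α β l = j}.Finite := by
  have : {l : Lam n r s | wt α β l = j} ⊆ ⋃ a, ⋃ b,
      (fun e => mkL (n := n) a b e) '' {e : Ex n | e.degree = (j - α a - β b).toNat} := by
    rintro ⟨a, b, e⟩ h
    refine Set.mem_iUnion.2 ⟨a, Set.mem_iUnion.2 ⟨b, e, ?_, rfl⟩⟩
    change α a + β b + (e.degree : ℤ) = j at h
    change e.degree = _
    omega
  refine Set.Finite.subset ?_ this
  exact Set.finite_iUnion fun a => Set.finite_iUnion fun b =>
    (Finsupp.finite_of_degree_eq _).image _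

theorem lam_dickson {n r s : ℕ} (S : Set (Lam n r s)) :
    ∃ F : Finset (Lam n r s), (∀ m ∈ F, m ∈ S) ∧ ∀ l ∈ S, ∃ m ∈ F, ∃ e, l = shf e m := by
  classical
  have h := fun c : Fin r × Fin s => dickson {e : Ex n | mkL (n := n) c.1 c.2 e ∈ S}
  choose F hF1 hF2 using h
  refine ⟨Finset.univ.biUnion fun c => (F c).image fun e => mkL (n := n) c.1 c.2 e, ?_, ?_⟩
  · intro m hm
    simp only [Finset.mem_biUnion, Finset.mem_image, Finset.mem_univ, true_and] at hm
    obtain ⟨c, e, he, rfl⟩ := hm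
    exact hF1 c e he
  · rintro ⟨a, b, e⟩ hl
    obtain ⟨m, hm, hle⟩ := hF2 (a, b) e hl
    refine ⟨mkL a b m, ?_, e - m, ?_⟩
    · simp only [Finset.mem_biUnion, Finset.mem_image, Finset.mem_univ, true_and]
      exact ⟨(a, b), m, hm, rfl⟩
    · change ((a, b, e) : Fin r × Fin s × Ex n) = (a, b, m + (e - m))
      rw [add_tsub_cancel_of_le hle]

end lam
section mono
variable {K : Type} [Field K] {n : ℕ}

/-- left monomial -/
def mL (e : Ex n) : PS K n := ∏ i, X i ^ e (Sum.inl i)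
/-- right monomial -/
def mR (e : Ex n) : PS K n := ∏ i, X i ^ e (Sum.inr i)

theorem mL_add (e e' : Ex n) : mL (K := K) (e + e') = mL e' * mL e := by
  rw [mul_comm]
  simp only [mL, Finsupp.add_apply, pow_add, Finset.prod_mul_distrib]
theorem mR_add (e e' : Ex n) : mR (K := K) (e + e') = mR e' * mR e := by
  rw [mul_comm]
  simp only [mR, Finsupp.add_apply, pow_add, Finset.prod_mul_distrib]

theorem mL_inl (i : Fin n) : mL (K := K) (Finsupp.single (Sum.inl i) 1) = X i := by
  classical
  rw [mL, Finset.prod_eq_single i]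
  · simp
  · intro b _ hb; simp [Finsupp.single_apply, hb.symm]
  · simp
theorem mL_inr (i : Fin n) : mL (K := K) (Finsupp.single (Sum.inr i) 1) = 1 := by
  simp [mL]
theorem mR_inr (i : Fin n) : mR (K := K) (Finsupp.single (Sum.inr i) 1) = X i := by
  classical
  rw [mR, Finset.prod_eq_single i]
  · simp
  · intro b _ hb; simp [Finsupp.single_apply, hb.symm]
  · simp
theorem mR_inl (i : Fin n) : mR (K := K) (Finsupp.single (Sum.inl i) 1) = 1 := by
  simp [mR]

theorem mL_elim (u v : Fin n →₀ ℕ) : mL (K := K) (Finsupp.sumElim u v) = monomial u 1 := by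
  rw [monomial_eq, Finsupp.prod_fintype _ _ (by simp)]; simp [mL]
theorem mR_elim (u v : Fin n →₀ ℕ) : mR (K := K) (Finsupp.sumElim u v) = monomial v 1 := by
  rw [monomial_eq, Finsupp.prod_fintype _ _ (by simp)]; simp [mR]

theorem mL_mem (e : Ex n) : mL e ∈ polyGrade K n ((∑ i, e (Sum.inl i) : ℕ) : ℤ) := by
  rw [mem_polyGrade_nat]
  exact IsHomogeneous.prod _ _ _ fun i _ => isHomogeneous_X_pow _ _
theorem mR_mem (e : Ex n) : mR e ∈ polyGrade K n ((∑ i, e (Sum.inr i) : ℕ) : ℤ) := by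
  rw [mem_polyGrade_nat]
  exact IsHomogeneous.prod _ _ _ fun i _ => isHomogeneous_X_pow _ _
theorem deg_Ex (e : Ex n) : (e.degree : ℤ) =
    ((∑ i, e (Sum.inl i) : ℕ) : ℤ) + ((∑ i, e (Sum.inr i) : ℕ) : ℤ) := by
  rw [Finsupp.degree_eq_sum, Fintype.sum_sum_type]; push_cast; rfl

end mono
end TG
end

noncomputable section
open MvPolynomial TensorProduct CategoryTheory
namespace TG
section g0
variable {K : Type} [Field K] {n : ℕ}
variable {M : Type} [AddCommGroup M] [Module K M] [Module (PS K n) M] [IsScalarTower K (PS K n) M]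
variable {N : Type} [AddCommGroup N] [Module K N] [Module (PS K n) N] [IsScalarTower K (PS K n) N]
variable {r s : ℕ} (μ : Fin r → M) (ν : Fin s → N)

theorem sB (s : PS K n) (x : N) : smulBilin K n N s x = s • x := rfl

/-- monomial tensors -/
def pt (l : Lam n r s) : M ⊗[K] N := (mL (K := K) l.2.2 • μ l.1) ⊗ₜ (mR (K := K) l.2.2 • ν l.2.1)

/-- action of a pair of monomials -/
def Ge (M N : Type) [AddCommGroup M] [Module K M] [Module (PS K n) M] [IsScalarTower K (PS K n) M]
    [AddCommGroup N] [Module K N] [Module (PS K n) N] [IsScalarTower K (PS K n) N] (e : Ex n) :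
    M ⊗[K] N →ₗ[K] M ⊗[K] N :=
  TensorProduct.map (smulBilin K n M (mL e)) (smulBilin K n N (mR e))

theorem pt_shf (e : Ex n) (l : Lam n r s) :
    pt (K := K) μ ν (shf e l) = Ge M N e (pt (K := K) μ ν l) := by
  rw [Ge, pt, pt, TensorProduct.map_tmul, sB, sB, smul_smul, smul_smul]
  simp only [shf, mL_add, mR_add]

/-- presentation map -/
def pim : (Lam n r s →₀ K) →ₗ[K] M ⊗[K] N := Finsupp.linearCombination K (pt (K := K) μ ν)

theorem pim_single (l : Lam n r s) (c : K) :
    pim μ ν (Finsupp.single l c) = c • pt (K := K) μ ν l := by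
  rw [pim, Finsupp.linearCombination_single]

theorem pim_shf (e : Ex n) (z : Lam n r s →₀ K) :
    pim μ ν (z.mapDomain (shf e)) = Ge M N e (pim μ ν z) := by
  induction z using Finsupp.induction_linear with
  | zero => simp
  | add v w hv hw => simp only [Finsupp.mapDomain_add, map_add, hv, hw]
  | single l c => rw [Finsupp.mapDomain_single, pim_single, pim_single, pt_shf, map_smul]

/-- relation operator -/
def Rg (M N : Type) [AddCommGroup M] [Module K M] [Module (PS K n) M] [IsScalarTower K (PS K n) M]
    [AddCommGroup N] [Module K N] [Module (PS K n) N] [IsScalarTower K (PS K n) N]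
    (g : GL (Fin n) K) (s : PS K n) : M ⊗[K] N →ₗ[K] M ⊗[K] N :=
  TensorProduct.map (smulBilin K n M (coordChange K n g s)) LinearMap.id -
    TensorProduct.map LinearMap.id (smulBilin K n N s)

theorem Rg_tmul (g : GL (Fin n) K) (s : PS K n) (m : M) (x : N) :
    Rg M N g s (m ⊗ₜ x) = (coordChange K n g s • m) ⊗ₜ x - m ⊗ₜ (s • x) := rfl

variable (α : Fin r → ℤ) (β : Fin s → ℤ)

/-- graded piece of the free space -/
def sj (n : ℕ) {r s : ℕ} (K : Type) [Field K] (α : Fin r → ℤ) (β : Fin s → ℤ) (j : ℤ) :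
    Submodule K (Lam n r s →₀ K) :=
  Finsupp.supported K K {l | wt α β l = j}

theorem sj_isGr : IsGr (sj n K α β) := by
  classical
  refine IsGr.of_proj ?_ (fun d => (Finsupp.supported K K {l | wt α β l = d}).subtype.comp
    (Finsupp.restrictDom K K {l | wt α β l = d})) ?_
  · rw [eq_top_iff]
    rintro z -
    induction z using Finsupp.induction_linear with
    | zero => exact zero_mem _
    | add v w hv hw => exact add_mem hv hw
    | single l c =>
      exact Submodule.mem_iSup_of_mem (wt α β l) (Finsupp.single_mem_supported K c rfl)
  · intro d e z hz
    rw [LinearMap.comp_apply, Submodule.subtype_apply, Finsupp.restrictDom_apply]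
    split_ifs with h
    · subst h
      rw [Finsupp.filter_eq_self_iff]
      intro l hl
      exact hz (Finsupp.mem_support_iff.2 hl)
    · rw [Finsupp.filter_eq_zero_iff]
      intro l hl
      by_contra h0
      have h1 : wt α β l = e := hz (Finsupp.mem_support_iff.2 h0)
      exact h (h1.symm.trans hl)

variable {α β μ ν} {GM : ℤ → Submodule K M} {GN : ℤ → Submodule K N}

theorem pt_parts (hM : GrMod (n := n) M GM) (hN : GrMod (n := n) N GN)
    (hμ : ∀ a, μ a ∈ GM (α a)) (hν : ∀ b, ν b ∈ GN (β b)) (l : Lam n r s) :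
    ∃ p q, p + q = wt α β l ∧ ∃ m ∈ GM p, ∃ x ∈ GN q, pt (K := K) μ ν l = m ⊗ₜ x := by
  refine ⟨_, _, ?_, _, hM.smul _ _ _ (mL_mem l.2.2) _ (hμ l.1), _,
    hN.smul _ _ _ (mR_mem l.2.2) _ (hν l.2.1), rfl⟩
  rw [wt, deg_Ex]; ring

theorem pim_gr (hM : GrMod (n := n) M GM) (hN : GrMod (n := n) N GN)
    (hμ : ∀ a, μ a ∈ GM (α a)) (hν : ∀ b, ν b ∈ GN (β b)) (d : ℤ) (z)
    (hz : z ∈ sj n K α β d) : pim μ ν z ∈ tensorGrade K GM GN d := by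
  have : sj n K α β d ≤ (tensorGrade K GM GN d).comap (pim μ ν) := by
    rw [sj, Finsupp.supported_eq_span_single, Submodule.span_le]
    rintro _ ⟨l, hl, rfl⟩
    obtain ⟨p, q, hpq, m, hm, x, hx, h⟩ := pt_parts hM hN hμ hν l
    change pim μ ν (Finsupp.single l (1 : K)) ∈ tensorGrade K GM GN d
    rw [pim_single, one_smul, h]
    exact tmul_mem (hpq.trans hl) hm hx
  exact this hz

theorem pim_surj (hμ : Submodule.span (PS K n) (Set.range μ) = ⊤)
    (hν : Submodule.span (PS K n) (Set.range ν) = ⊤) :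
    Function.Surjective (pim (K := K) (n := n) μ ν) := by
  rw [← LinearMap.range_eq_top, eq_top_iff]
  have h1 : ∀ (f h : PS K n) a b, (f • μ a) ⊗ₜ[K] (h • ν b) ∈ LinearMap.range (pim (K := K) (n := n) μ ν) := by
    intro f h a b
    induction f using MvPolynomial.induction_on' with
    | add p q hp hq => rw [add_smul, add_tmul]; exact add_mem hp hq
    | monomial u c =>
      induction h using MvPolynomial.induction_on' with
      | add p q hp hq => rw [add_smul, tmul_add]; exact add_mem hp hq
      | monomial v d =>
        refine ⟨Finsupp.single (mkL a b (Finsupp.sumElim u v)) (c * d), ?_⟩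
        rw [pim_single, pt]
        change (c * d) • ((mL (K := K) (Finsupp.sumElim u v) • μ a) ⊗ₜ[K]
          (mR (K := K) (Finsupp.sumElim u v) • ν b)) = _
        rw [mL_elim, mR_elim, ← smul_smul, ← tmul_smul, smul_tmul', ← smul_assoc, ← smul_assoc,
          smul_monomial, smul_monomial, smul_eq_mul, smul_eq_mul, mul_one, mul_one]
  rintro z -
  induction z using TensorProduct.induction_on with
  | zero => exact zero_mem _
  | add x y hx hy => exact add_mem hx hy
  | tmul m x =>
    obtain ⟨v, rfl⟩ := cov_surj μ hμ m
    obtain ⟨w, rfl⟩ := cov_surj ν hν x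
    rw [cov_apply, cov_apply, sum_tmul]
    refine Submodule.sum_mem _ fun a _ => ?_
    rw [tmul_sum]
    exact Submodule.sum_mem _ fun b _ => h1 _ _ _ _

variable (α β μ ν)
/-- index set of the relations -/
def TT : Type := (Σ j : ℤ, ↥(LinearMap.ker (pim (K := K) (n := n) μ ν) ⊓ sj n K α β j)) ⊕
  (Fin n × Lam n r s)

/-- degree of the relations -/
def dg : TT (K := K) (n := n) μ ν α β → ℤ
  | Sum.inl z => z.1
  | Sum.inr kl => wt α β kl.2 + 1

/-- generic linear relation -/
def lr (k : Fin n) (l : Lam n r s) : Lam n r s →₀ MvPolynomial (Fin n × Fin n) K :=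
  (∑ i, Finsupp.single (shf (Finsupp.single (Sum.inl i) 1) l) (X (i, k))) -
    Finsupp.single (shf (Finsupp.single (Sum.inr k) 1) l) 1

/-- the relations -/
def uu : TT (K := K) (n := n) μ ν α β → (Lam n r s →₀ MvPolynomial (Fin n × Fin n) K)
  | Sum.inl z => Finsupp.mapRange (algebraMap K _) (map_zero _) z.2.1
  | Sum.inr kl => lr kl.1 kl.2

/-- evaluation -/
def evg (g : GL (Fin n) K) : MvPolynomial (Fin n × Fin n) K →ₐ[K] K :=
  aeval (fun p => (g : Matrix (Fin n) (Fin n) K) p.1 p.2)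

theorem uu_supp (t : TT (K := K) (n := n) μ ν α β) (l : Lam n r s) (h : uu μ ν α β t l ≠ 0) :
    wt α β l = dg μ ν α β t := by
  rcases t with ⟨j, z, hz⟩ | ⟨k, l'⟩
  · refine hz.2 (Finsupp.mem_support_iff.2 fun h0 => h ?_)
    simp [uu, h0]
  · have : lr (K := K) k l' ∈ Finsupp.supported (MvPolynomial (Fin n × Fin n) K)
        (MvPolynomial (Fin n × Fin n) K) {l | wt α β l = wt α β l' + 1} := by
      refine sub_mem (Submodule.sum_mem _ fun i _ => ?_) ?_
      · refine Finsupp.single_mem_supported _ _ ?_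
        change wt _ _ _ = _
        rw [wt_shf, Finsupp.degree_single]; rfl
      · refine Finsupp.single_mem_supported _ _ ?_
        change wt _ _ _ = _
        rw [wt_shf, Finsupp.degree_single]; rfl
    exact this (Finsupp.mem_support_iff.2 h)

theorem uu_shf (e : Ex n) (t : TT (K := K) (n := n) μ ν α β) :
    ∃ t', dg μ ν α β t' = dg μ ν α β t + (e.degree : ℤ) ∧
      (uu μ ν α β t).mapDomain (shf e) = uu μ ν α β t' := by
  classical
  rcases t with ⟨j, z, hz⟩ | ⟨k, l'⟩
  · refine ⟨Sum.inl ⟨j + (e.degree : ℤ), z.mapDomain (shf e), ?_, ?_⟩, rfl, ?_⟩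
    · change pim μ ν _ = 0
      rw [pim_shf, show pim μ ν z = 0 from hz.1, map_zero]
    · intro l hl
      obtain ⟨l', hl', rfl⟩ := Finset.mem_image.1 (Finsupp.mapDomain_support hl)
      change wt _ _ _ = _
      rw [wt_shf, show wt α β l' = j from hz.2 hl']
    · simp only [uu]
      exact Finsupp.mapDomain_mapRange _ _ _ _ (map_add _)
  · refine ⟨Sum.inr (k, shf e l'), ?_, ?_⟩
    · simp only [dg, wt_shf]; ring
    · simp only [uu, lr]
      rw [sub_eq_add_neg, Finsupp.mapDomain_add, ← Finsupp.single_neg, Finsupp.mapDomain_single,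
        Finsupp.mapDomain_finsetSum, sub_eq_add_neg, ← Finsupp.single_neg, shf_comm]
      simp only [Finsupp.mapDomain_single, shf_comm e]

theorem sp_inl (g : GL (Fin n) K) (j) (z) :
    sp (evg g) (uu (K := K) (n := n) μ ν α β (Sum.inl ⟨j, z⟩)) = z := by
  ext l
  rw [sp_apply]
  simp [uu]

theorem pim_inr (g : GL (Fin n) K) (k : Fin n) (l : Lam n r s) :
    pim μ ν (sp (evg g) (uu (K := K) (n := n) μ ν α β (Sum.inr (k, l)))) =
      Rg M N g (X k) (pt (K := K) μ ν l) := by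
  have h : sp (evg g) (uu (K := K) (n := n) μ ν α β (Sum.inr (k, l))) =
    (∑ i, Finsupp.single (shf (Finsupp.single (Sum.inl i) 1) l)
      ((g : Matrix (Fin n) (Fin n) K) i k)) -
    Finsupp.single (shf (Finsupp.single (Sum.inr k) 1) l) 1 := by
    simp only [uu, lr, map_sub, map_sum]
    simp [sp, evg]
  rw [h, map_sub, map_sum]
  simp only [pim_single, pt_shf]
  rw [pt, Rg_tmul, cC_X, one_smul, Finset.sum_smul, sum_tmul]
  congr 1
  · refine Finset.sum_congr rfl fun i _ => ?_
    rw [Ge, TensorProduct.map_tmul, sB, sB, mL_inl, mR_inl, one_smul, smul_assoc, smul_tmul']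
  · rw [Ge, TensorProduct.map_tmul, sB, sB, mL_inr, mR_inr, one_smul]

end g0
end TG
end

noncomputable section
open MvPolynomial TensorProduct CategoryTheory
namespace TG
section g1
variable {K : Type} [Field K] {n : ℕ}
variable {M : Type} [AddCommGroup M] [Module K M] [Module (PS K n) M] [IsScalarTower K (PS K n) M]
variable {N : Type} [AddCommGroup N] [Module K N] [Module (PS K n) N] [IsScalarTower K (PS K n) N]
variable {r s : ℕ} {μ : Fin r → M} {ν : Fin s → N} {α : Fin r → ℤ} {β : Fin s → ℤ}
  {GM : ℤ → Submodule K M} {GN : ℤ → Submodule K N}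

/-- the special span for this situation -/
def Vg (μ : Fin r → M) (ν : Fin s → N) (α : Fin r → ℤ) (β : Fin s → ℤ) (g : GL (Fin n) K) (j : ℤ) :
    Submodule K (Lam n r s →₀ K) :=
  VK (evg g) (uu (K := K) (n := n) μ ν α β) (dg μ ν α β) j

theorem Vg_X (hM : GrMod (n := n) M GM) (hN : GrMod (n := n) N GN)
    (hμ : ∀ a, μ a ∈ GM (α a)) (hν : ∀ b, ν b ∈ GN (β b))
    (hμs : Submodule.span (PS K n) (Set.range μ) = ⊤)
    (hνs : Submodule.span (PS K n) (Set.range ν) = ⊤) (g : GL (Fin n) K) (k : Fin n) (j : ℤ)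
    (y : M ⊗[K] N) (hy : y ∈ tensorGrade K GM GN j) :
    Rg M N g (X k) y ∈ (Vg μ ν α β g (j + 1)).map (pim (K := K) (n := n) μ ν) := by
  rw [← IsGr.strict_surj (sj_isGr (n := n) α β) (hM.gr.tensor hN.gr) (pim μ ν)
    (pim_gr hM hN hμ hν) (pim_surj hμs hνs)] at hy
  obtain ⟨z, hz, rfl⟩ := hy
  have : sj n K α β j ≤ ((Vg μ ν α β g (j + 1)).map (pim (K := K) (n := n) μ ν)).comap
      ((Rg M N g (X k)).comp (pim μ ν)) := by
    rw [sj, Finsupp.supported_eq_span_single, Submodule.span_le]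
    rintro _ ⟨l, hl, rfl⟩
    change Rg M N g (X k) (pim μ ν (Finsupp.single l (1 : K))) ∈
      (Vg μ ν α β g (j + 1)).map (pim (K := K) (n := n) μ ν)
    rw [pim_single, one_smul, ← pim_inr μ ν α β]
    refine Submodule.mem_map_of_mem (Submodule.subset_span ⟨_, ?_, rfl⟩)
    change wt α β l + 1 = j + 1
    rw [show wt α β l = j from hl]
  exact this hz

theorem Rg_one (g : GL (Fin n) K) (y : M ⊗[K] N) : Rg M N g 1 y = 0 := by
  induction y using TensorProduct.induction_on with
  | zero => simp
  | add x y hx hy => simp only [map_add, hx, hy, add_zero]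
  | tmul m x => rw [Rg_tmul, map_one, one_smul, one_smul, sub_self]

theorem Vg_all (hM : GrMod (n := n) M GM) (hN : GrMod (n := n) N GN)
    (hμ : ∀ a, μ a ∈ GM (α a)) (hν : ∀ b, ν b ∈ GN (β b))
    (hμs : Submodule.span (PS K n) (Set.range μ) = ⊤)
    (hνs : Submodule.span (PS K n) (Set.range ν) = ⊤) (g : GL (Fin n) K) (d : ℤ) (f : PS K n)
    (hf : f ∈ polyGrade K n d) (p q : ℤ) (m : M) (hm : m ∈ GM p) (x : N) (hx : x ∈ GN q) :
    Rg M N g f (m ⊗ₜ x) ∈ (Vg μ ν α β g (p + q + d)).map (pim (K := K) (n := n) μ ν) := by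
  let Q : PS K n → ℤ → Prop := fun f d => f ∈ polyGrade K n d ∧ ∀ p q, ∀ m ∈ GM p, ∀ x ∈ GN q,
    Rg M N g f (m ⊗ₜ x) ∈ (Vg μ ν α β g (p + q + d)).map (pim (K := K) (n := n) μ ν)
  have Q1 : Q 1 0 := ⟨one_mem_polyGrade, fun p q m _ x _ => by rw [Rg_one]; exact zero_mem _⟩
  have QX : ∀ k, Q (X k) 1 := fun k => ⟨X_mem_polyGrade k, fun p q m hm x hx =>
    Vg_X hM hN hμ hν hμs hνs g k (p + q) _ (tmul_mem rfl hm hx)⟩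
  have Qm : ∀ f f' d d', Q f d → Q f' d' → Q (f * f') (d + d') := by
    rintro f f' d d' ⟨hf, h⟩ ⟨hf', h'⟩
    refine ⟨polyGrade_mul hf hf', fun p q m hm x hx => ?_⟩
    have e1 : Rg M N g (f * f') (m ⊗ₜ x) =
        Rg M N g f ((coordChange K n g f' • m) ⊗ₜ x) + Rg M N g f' (m ⊗ₜ (f • x)) := by
      rw [Rg_tmul, Rg_tmul, Rg_tmul, map_mul, mul_smul, mul_comm f f', mul_smul]
      abel
    rw [e1]
    refine add_mem ?_ ?_
    · have := h (d' + p) q _ (hM.smul d' p _ (cC_mem g _ _ hf') m hm) x hx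
      rwa [show d' + p + q + d = p + q + (d + d') by ring] at this
    · have := h' p (d + q) m hm _ (hN.smul d q _ hf x hx)
      rwa [show p + (d + q) + d' = p + q + (d + d') by ring] at this
  have Qp : ∀ k (e : ℕ), Q (X k ^ e) e := by
    intro k e
    induction e with
    | zero => simpa using Q1
    | succ e ih =>
      rw [pow_succ]; push_cast; exact Qm _ _ _ _ ih (QX k)
  have Qmon : ∀ v : Fin n →₀ ℕ, Q (monomial v 1) (v.degree : ℤ) := by
    intro v
    induction v using Finsupp.induction_linear with
    | zero => simpa using Q1
    | add v w hv hw =>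
      have := Qm _ _ _ _ hv hw
      rw [monomial_mul, one_mul] at this
      rw [map_add]; push_cast; exact this
    | single k e =>
      rw [Finsupp.degree_single, ← X_pow_eq_monomial]; exact Qp k e
  rcases lt_or_ge d 0 with hd | hd
  · rw [polyGrade_neg hd, Submodule.mem_bot] at hf
    subst hf
    rw [Rg_tmul]; simp
  · obtain ⟨d, rfl⟩ := Int.eq_ofNat_of_zero_le hd
    rw [mem_polyGrade_nat] at hf
    have hlin : ∃ L : PS K n →ₗ[K] M ⊗[K] N, ∀ f, L f = Rg M N g f (m ⊗ₜ x) :=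
      ⟨((TensorProduct.mk K M N).flip x).comp (((smulBilin K n M).flip m).comp
        (coordChange K n g).toLinearMap) -
        (TensorProduct.mk K M N m).comp ((smulBilin K n N).flip x), fun f => rfl⟩
    obtain ⟨L, hL⟩ := hlin
    rw [← hL, f.as_sum, map_sum]
    refine Submodule.sum_mem _ fun v hv => ?_
    have hdv : v.degree = d := by
      have := hf (mem_support_iff.1 hv)
      rw [Finsupp.degree_eq_weight_one]; exact this
    rw [← mul_one (coeff v f), ← smul_eq_mul, ← smul_monomial, map_smul, hL]
    refine Submodule.smul_mem _ _ ?_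
    have := (Qmon v).2 p q m hm x hx
    rwa [hdv] at this

/-- inclusion in the tower -/
def toB (N : Type) [AddCommGroup N] [Module K N] (g : GL (Fin n) K) :
    N →ₗ[K] barD K n (Tw g N) 0 := (toTw g).toLinearMap

/-- passage to the twisted tensor product -/
def tauE (M : Type) [AddCommGroup M] [Module K M] (N : Type) [AddCommGroup N] [Module K N]
    (g : GL (Fin n) K) : M ⊗[K] N →ₗ[K] M ⊗[K] barD K n (Tw g N) 0 :=
  TensorProduct.map LinearMap.id (toB N g)

theorem tauE_inj (g : GL (Fin n) K) : Function.Injective (tauE (n := n) M N g) :=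
  (TensorProduct.congr (LinearEquiv.refl K M) (toTw g)).injective

theorem barB_tau (g : GL (Fin n) K) (m : M) (f : PS K n) (x : N) :
    barB K n (Tw g N) M 0 (m ⊗ₜ tm (Tw g N) 0 f (toB N g x)) =
      tauE M N g (Rg M N g (coordChange K n g⁻¹ f) (m ⊗ₜ x)) := by
  rw [barB_tmul, am_tm, Rg_tmul, cC_inv, map_sub]
  exact congrArg₂ (· - ·) rfl (congrArg (fun y => m ⊗ₜ[K] y) (barC_zero (Tw g N) f (toTw g x)))

theorem Vg_map (hM : GrMod (n := n) M GM) (hN : GrMod (n := n) N GN)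
    (hμ : ∀ a, μ a ∈ GM (α a)) (hν : ∀ b, ν b ∈ GN (β b))
    (hμs : Submodule.span (PS K n) (Set.range μ) = ⊤)
    (hνs : Submodule.span (PS K n) (Set.range ν) = ⊤) (g : GL (Fin n) K) (j : ℤ) :
    (Vg μ ν α β g j).map ((tauE M N g).comp (pim (K := K) (n := n) μ ν)) =
      (tensorGrade K GM (barDGrade K n (Tw g N) (TwG g GN) (0 + 1)) j).map
        (barB K n (Tw g N) M 0) := by
  apply le_antisymm
  · rw [Submodule.map_le_iff_le_comap]
    refine Submodule.span_le.2 ?_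
    rintro _ ⟨t, ht, rfl⟩
    rcases t with ⟨j', z⟩ | ⟨k, l⟩
    · change tauE M N g (pim μ ν (sp (evg g) (uu (K := K) (n := n) μ ν α β (Sum.inl ⟨j', z⟩)))) ∈
        (tensorGrade K GM (barDGrade K n (Tw g N) (TwG g GN) (0 + 1)) j).map
        (barB K n (Tw g N) M 0)
      rw [sp_inl, show pim μ ν (z : Lam n r s →₀ K) = 0 from z.2.1, map_zero]
      exact zero_mem _
    · change tauE M N g (pim μ ν (sp (evg g) (uu (K := K) (n := n) μ ν α β (Sum.inr (k, l))))) ∈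
        (tensorGrade K GM (barDGrade K n (Tw g N) (TwG g GN) (0 + 1)) j).map
        (barB K n (Tw g N) M 0)
      rw [pim_inr]
      obtain ⟨p, q, hpq, m, hm, x, hx, h⟩ := pt_parts hM hN hμ hν l
      have hj : wt α β l + 1 = j := ht
      rw [h, ← cC_inv' g (X k), ← barB_tau]
      refine Submodule.mem_map_of_mem (tmul_mem (p := p) (q := 1 + q) (by omega) hm ?_)
      exact tm_mem (GN := TwG g GN) (i := 0) rfl (cC_mem g _ _ (X_mem_polyGrade k)) hx
  · rw [Submodule.map_le_iff_le_comap]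
    refine tensorGrade_le _ _ _ _ ?_
    intro p q hpq m hm t ht
    refine barDGrade_le (TwG g GN) 0 q ((((Vg μ ν α β g j).map
      ((tauE M N g).comp (pim (K := K) (n := n) μ ν))).comap (barB K n (Tw g N) M 0)).comap
        (TensorProduct.mk K M _ m)) ?_ ht
    intro d q' hd f hf x hx
    change barB K n (Tw g N) M 0 (m ⊗ₜ tm (Tw g N) 0 f (toB N g (show N from x))) ∈
      (Vg μ ν α β g j).map ((tauE M N g).comp (pim (K := K) (n := n) μ ν))
    rw [barB_tau, Submodule.map_comp]
    have := Vg_all hM hN hμ hν hμs hνs g d _ (cC_mem g⁻¹ d f hf) p q' m hm (show N from x) hx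
    rw [show p + q' + d = j by omega] at this
    exact Submodule.mem_map_of_mem this

theorem Vg_rank (hM : GrMod (n := n) M GM) (hN : GrMod (n := n) N GN)
    (hμ : ∀ a, μ a ∈ GM (α a)) (hν : ∀ b, ν b ∈ GN (β b))
    (hμs : Submodule.span (PS K n) (Set.range μ) = ⊤)
    (hνs : Submodule.span (PS K n) (Set.range ν) = ⊤) (g : GL (Fin n) K) (j : ℤ) :
    be (n := n) (TwG g GN) GM 0 j +
      Module.finrank K ↥(LinearMap.ker (pim (K := K) (n := n) μ ν) ⊓ sj n K α β j) =
      Module.finrank K (Vg (K := K) (n := n) μ ν α β g j) := by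
  have hle : Vg (K := K) (n := n) μ ν α β g j ≤ sj n K α β j := by
    refine Submodule.span_le.2 ?_
    rintro _ ⟨t, ht, rfl⟩
    intro l hl
    refine (uu_supp μ ν α β t l ?_).trans ht
    intro h0
    apply Finsupp.mem_support_iff.1 hl
    simp only [sp_apply, h0, map_zero]
  have hfd : FiniteDimensional K (sj (r := r) (s := s) n K α β j) := by
    have := (wt_fin (n := n) α β j).to_subtype
    exact Module.Finite.equiv
      (Finsupp.supportedEquivFinsupp (M := K) (R := K) {l : Lam n r s | wt α β l = j}).symm
  have hfd' : FiniteDimensional K (Vg (K := K) (n := n) μ ν α β g j) :=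
    Submodule.finiteDimensional_of_le hle
  have hr := rank_nul ((tauE M N g).comp (pim (K := K) (n := n) μ ν))
    (Vg (K := K) (n := n) μ ν α β g j)
  rw [← hr, Vg_map hM hN hμ hν hμs hνs, be]
  congr 1
  rw [LinearMap.ker_comp, LinearMap.ker_eq_bot.2 (tauE_inj g)]
  have hk : Submodule.comap (pim (K := K) (n := n) μ ν) ⊥ = LinearMap.ker (pim μ ν) := rfl
  rw [hk]
  have : LinearMap.ker (pim (K := K) (n := n) μ ν) ⊓ Vg (K := K) (n := n) μ ν α β g j =
      LinearMap.ker (pim (K := K) (n := n) μ ν) ⊓ sj n K α β j := by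
    apply le_antisymm (inf_le_inf_left _ hle)
    intro z hz
    refine ⟨hz.1, Submodule.subset_span ⟨Sum.inl ⟨j, z, hz⟩, rfl, ?_⟩⟩
    exact sp_inl μ ν α β g j ⟨z, hz⟩
  rw [this]

theorem Gen.zero (hM : GrMod (n := n) M GM) (hMf : Module.Finite (PS K n) M) :
    Gen (n := n) GM 0 := by
  intro N _ _ _ _ GN hN hNf
  obtain ⟨r, α, μ, hμ, hμs⟩ := hM.gens
  obtain ⟨s, β, ν, hν, hνs⟩ := hN.gens
  obtain ⟨f, hf0, hf⟩ := lemG (K := K) (fun g : GL (Fin n) K => evg g) (shf (r := r) (s := s))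
    shf_mono (wt α β) (fun e => (e.degree : ℤ)) (wt_shf α β) (wt_fin α β)
    (uu (K := K) (n := n) μ ν α β) (dg μ ν α β) (uu_supp μ ν α β) (uu_shf μ ν α β) lam_dickson
  refine ⟨f, hf0, fun g hg g0 j => ?_⟩
  have h1 : Module.finrank K (Vg (K := K) (n := n) μ ν α β g0 j) ≤
    Module.finrank K (Vg (K := K) (n := n) μ ν α β g j) := hf g (by rwa [← coe_aeval_eq_eval] at hg) g0 j
  have h2 := Vg_rank hM hN hμ hν hμs hνs g j
  have h3 := Vg_rank hM hN hμ hν hμs hνs g0 j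
  omega

theorem Gen.all (hM : GrMod (n := n) M GM) (hMf : Module.Finite (PS K n) M) (i : ℕ) :
    Gen (n := n) GM i := by
  induction i with
  | zero => exact Gen.zero hM hMf
  | succ i ih => exact Gen.succ GM hM hMf i ih

end g1
end TG
end


noncomputable section
variable (K : Type) [Field K] (n : ℕ)

/-- **Lemma 2.3** (Caviglia–Murai): for a finitely generated graded `S`-module `M` and a
homogeneous ideal `J ⊆ S`, for a general change of coordinates `g ∈ GL_n(K)` one has
`dim_K Tor_i(M, S/g(J))_j ≤ dim_K Tor_i(M, S/J)_j` for all `i` and all `j`. -/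
theorem tor_dim_general_coordinates_le [Infinite K]
    (Mod : Type) [AddCommGroup Mod] [Module K Mod] [Module (PS K n) Mod]
    [IsScalarTower K (PS K n) Mod]
    (GMod : ℤ → Submodule K Mod) [DirectSum.Decomposition GMod]
    (hGMod : ∀ (a : ℕ) (b : ℤ) (s : PS K n) (x : Mod),
      s ∈ homogeneousSubmodule (Fin n) K a → x ∈ GMod b → s • x ∈ GMod ((a : ℤ) + b))
    (hModfg : Module.Finite (PS K n) Mod)
    (J : Ideal (PS K n)) (hJ : IsHomog K n J) :
    generally K n (fun g => ∀ (i : ℕ) (j : ℤ),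
      torStrandDim K n (PS K n ⧸ Ideal.map (coordChange K n g) J) Mod
          GMod (quotGrade K n (Ideal.map (coordChange K n g) J)) i j ≤
        torStrandDim K n (PS K n ⧸ J) Mod GMod (quotGrade K n J) i j) := by
  have hM : TG.GrMod (n := n) Mod GMod := by
    refine ⟨TG.IsGr.of_decomp GMod, ?_⟩
    intro p q f hf x hx
    rcases lt_or_ge p 0 with hd | hd
    · rw [TG.polyGrade_neg hd, Submodule.mem_bot] at hf
      rw [hf, zero_smul]; exact zero_mem _
    · obtain ⟨p, rfl⟩ := Int.eq_ofNat_of_zero_le hd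
      exact hGMod p q f x ((TG.mem_polyGrade_nat p f).1 hf) hx
  have hMl := hM.isLF
  have hN := TG.quotGrade_grMod J hJ
  have hNl := hN.isLF
  have hex := fun i => TG.Gen.all hM hModfg i (PS K n ⧸ J) (quotGrade K n J) hN inferInstance
  choose f hf0 hf using hex
  refine ⟨∏ i ∈ Finset.range (n + 1), f i, Finset.prod_ne_zero_iff.2 fun i _ => hf0 i, ?_⟩
  intro g hg i j
  have hN' := TG.quotGrade_grMod _ (TG.mapJ_homog g J hJ)
  have hNl' := hN'.isLF
  have hbe : ∀ i ≤ n, TG.be (n := n) (quotGrade K n J) GMod i j ≤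
      TG.be (n := n) (quotGrade K n (Ideal.map (coordChange K n g) J)) GMod i j := by
    intro i hi
    have hgi : eval (fun p => (g : Matrix (Fin n) (Fin n) K) p.1 p.2) (f i) ≠ 0 := by
      rw [map_prod] at hg
      exact Finset.prod_ne_zero_iff.1 hg i (Finset.mem_range.2 (by omega))
    have h1 := hf i g hgi 1 j
    rw [TG.iso_be GMod (TG.oneTw (N := PS K n ⧸ J)) hM hN.gr (TG.Tw_grMod 1 hN).gr
      (fun d x hx => hx) (TG.toTw 1).bijective] at h1
    rwa [TG.iso_be GMod (TG.qTw g J) hM hN'.gr (TG.Tw_grMod g hN).gr (TG.qTw_gr g J)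
      (TG.qTw_bij g J)] at h1
  have hxd : ∀ i, TG.xd (n := n) (quotGrade K n (Ideal.map (coordChange K n g) J)) GMod i j =
      TG.xd (n := n) (quotGrade K n J) GMod i j := by
    intro i
    have h1 := TG.iso_xd GMod (TG.oneTw (N := PS K n ⧸ J)) hM hN.gr (TG.Tw_grMod 1 hN).gr
      (fun d x hx => hx) (TG.toTw 1).bijective i j
    have h2 := TG.iso_xd GMod (TG.qTw g J) hM hN'.gr (TG.Tw_grMod g hN).gr (TG.qTw_gr g J)
      (TG.qTw_bij g J) i j
    rw [← h2, ← h1]; rfl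
  rcases i with _ | i
  · rw [TG.tor_zero _ _ hM hN', TG.tor_zero _ _ hM hN, hxd]
    have := hbe 0 (Nat.zero_le _)
    omega
  · rcases le_or_gt n i with hi | hi
    · rw [TG.tor_vanish _ _ hMl hNl' i hi]
      exact Nat.zero_le _
    · rw [TG.tor_succ _ _ hM hN' hMl hNl', TG.tor_succ _ _ hM hN hMl hNl, hxd]
      have := hbe i hi.le
      have := hbe (i + 1) hi
      omega

end
end
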